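/- If J_B is a connected component of F_B and J_W is a connected component of F_W, then exactly one of the following three possibilities holds: J_B ∩ J_W = ∅, or J_B ⊆ J_W, or J_W ⊆ J_B. -/

import Mathlib

open MeasureTheory Set Filter

/-- The relative measure of `H` in the interval `(p - ω, p + ω)`,
i.e. `λ(H | I_ω(p)) = λ(H ∩ I_ω(p)) / (2ω)`. -/
noncomputable def relMeasure (H : Set ℝ) (p ω : ℝ) : ℝ :=
  (volume (H ∩ Ioo (p - ω) (p + ω))).toReal / (2 * ω)

/-- A configuration: a finite increasing sequence `0 < a 0 < b 0 < a 1 < ⋯ < a (r-1) < b (r-1)`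
of positive reals. -/
structure Config where
  r : ℕ
  hr : 0 < r
  a : Fin r → ℝ
  b : Fin r → ℝ
  ha : ∀ i, 0 < a i
  hab : ∀ i, a i < b i
  hba : ∀ i j : Fin r, i < j → b i < a j

/-- The set `C = (-∞,0) ∪ ⋃ i (a i, b i)` associated to a configuration. -/
def Config.carrier (C : Config) : Set ℝ := Iio 0 ∪ ⋃ i, Ioo (C.a i) (C.b i)

/-- The endpoints of a configuration: `0` together with all the `a i` and `b i`. -/
def Config.endpoints (C : Config) : Set ℝ := insert 0 (range C.a ∪ range C.b)

/-- `C` is a counterexample to `K(δ)`: every endpoint `c` of `C` admits a radius `ω > 0`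
with `λ(C | I_ω(c)) ∉ [δ, 1-δ]`. -/
def IsCounterexample (δ : ℝ) (C : Config) : Prop :=
  ∀ c ∈ C.endpoints, ∃ ω > 0, relMeasure C.carrier c ω ∉ Icc δ (1 - δ)

/-- `ω(p) = sup {ω ≥ 0 : λ(C | I_ω(p)) ∉ (δ, 1-δ)}`. -/
noncomputable def omegaMax (C : Config) (δ p : ℝ) : ℝ :=
  sSup {ω : ℝ | 0 ≤ ω ∧ relMeasure C.carrier p ω ∉ Ioo δ (1 - δ)}

/-- An endpoint `p` is black if `λ(C | I_{ω(p)}(p)) ≥ 1 - δ`. -/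
def IsBlack (C : Config) (δ p : ℝ) : Prop :=
  p ∈ C.endpoints ∧ 1 - δ ≤ relMeasure C.carrier p (omegaMax C δ p)

/-- An endpoint `p` is white if `λ(C | I_{ω(p)}(p)) ≤ δ`. -/
def IsWhite (C : Config) (δ p : ℝ) : Prop :=
  p ∈ C.endpoints ∧ relMeasure C.carrier p (omegaMax C δ p) ≤ δ

/-- The set `F` of endpoints of `C` lying strictly between `v_B` and `v_W`. -/
def Fpts (C : Config) (vB vW : ℝ) : Set ℝ := {v | v ∈ C.endpoints ∧ vB < v ∧ v < vW}

/-- `F_B1 = ⋃ {I_{μ(p)}(p) : p ∈ F black}`. -/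
def FB1 (C : Config) (δ : ℝ) (μ : ℝ → ℝ) (vB vW : ℝ) : Set ℝ :=
  ⋃ p ∈ {q : ℝ | q ∈ Fpts C vB vW ∧ IsBlack C δ q}, Ioo (p - μ p) (p + μ p)

/-- `F_W1 = ⋃ {I_{μ(p)}(p) : p ∈ F white}`. -/
def FW1 (C : Config) (δ : ℝ) (μ : ℝ → ℝ) (vB vW : ℝ) : Set ℝ :=
  ⋃ p ∈ {q : ℝ | q ∈ Fpts C vB vW ∧ IsWhite C δ q}, Ioo (p - μ p) (p + μ p)

/-- `F_B2 = ⋃ {(a i, b i) : F_B1 ∩ (a i, b i) ≠ ∅}`. -/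
def FB2 (C : Config) (δ : ℝ) (μ : ℝ → ℝ) (vB vW : ℝ) : Set ℝ :=
  ⋃ i ∈ {i : Fin C.r | (FB1 C δ μ vB vW ∩ Ioo (C.a i) (C.b i)).Nonempty},
    Ioo (C.a i) (C.b i)

/-- `F_W2 = ⋃ {(b i, a (i+1)) : F_W1 ∩ (b i, a (i+1)) ≠ ∅}`. -/
def FW2 (C : Config) (δ : ℝ) (μ : ℝ → ℝ) (vB vW : ℝ) : Set ℝ :=
  ⋃ (i : ℕ) (h : i + 1 < C.r)
    (_ : (FW1 C δ μ vB vW ∩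
      Ioo (C.b ⟨i, Nat.lt_of_succ_lt h⟩) (C.a ⟨i + 1, h⟩)).Nonempty),
      Ioo (C.b ⟨i, Nat.lt_of_succ_lt h⟩) (C.a ⟨i + 1, h⟩)

/-- `F_B = F_B1 ∪ F_B2`. -/
def FB (C : Config) (δ : ℝ) (μ : ℝ → ℝ) (vB vW : ℝ) : Set ℝ :=
  FB1 C δ μ vB vW ∪ FB2 C δ μ vB vW

/-- `F_W = F_W1 ∪ F_W2`. -/
def FW (C : Config) (δ : ℝ) (μ : ℝ → ℝ) (vB vW : ℝ) : Set ℝ :=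
  FW1 C δ μ vB vW ∪ FW2 C δ μ vB vW

/-! ### Profiles: cumulative black mass of an alternating system of cells -/

/-- `G` is the cumulative mass function of the alternating set with endpoints `e 0 < ⋯ < e (2n)`. -/
structure Prof (n : ℕ) (e : ℕ → ℝ) (G : ℝ → ℝ) : Prop where
  mono : ∀ i < 2 * n, e i < e (i + 1)
  left : ∀ x y, x ≤ y → y ≤ e 0 → G y - G x = y - x
  right : ∀ x y, e (2 * n) ≤ x → x ≤ y → G y - G x = 0
  black : ∀ k < n, ∀ x y, e (2 * k + 1) ≤ x → x ≤ y → y ≤ e (2 * k + 2) → G y - G x = y - x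
  white : ∀ k < n, ∀ x y, e (2 * k) ≤ x → x ≤ y → y ≤ e (2 * k + 1) → G y - G x = 0

/-- monotone and 1-Lipschitz -/
def ML (G : ℝ → ℝ) : Prop := ∀ x y, x ≤ y → G x ≤ G y ∧ G y - G x ≤ y - x

theorem Prof.lt {n e G} (h : Prof n e G) {i j : ℕ} (hij : i < j) (hj : j ≤ 2 * n) : e i < e j := by
  induction j with
  | zero => omega
  | succ k ih =>
    have h1 := h.mono k (by omega)
    rcases Nat.lt_or_ge i k with h2 | h2
    · exact (ih h2 (by omega)).trans h1
    · have : i = k := by omega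
      rw [this]; exact h1

theorem Prof.le {n e G} (h : Prof n e G) {i j : ℕ} (hij : i ≤ j) (hj : j ≤ 2 * n) : e i ≤ e j := by
  rcases Nat.eq_or_lt_of_le hij with h1 | h1
  · rw [h1]
  · exact (h.lt h1 hj).le

theorem Prof.lt_iff {n e G} (h : Prof n e G) {i j : ℕ} (hi : i ≤ 2 * n) (hj : j ≤ 2 * n) :
    e i < e j ↔ i < j := by
  constructor
  · intro h1
    by_contra h2
    exact absurd (h.le (not_lt.mp h2) hi) (not_le.mpr h1)
  · intro h1; exact h.lt h1 hj

/-- Induction principle over the cells: a transitive relation which holds on all cells holds. -/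
theorem Prof.rel {n e G} (h : Prof n e G) (R : ℝ → ℝ → Prop)
    (htr : ∀ x y z, x ≤ y → y ≤ z → R x y → R y z → R x z)
    (hl : ∀ x y, x ≤ y → y ≤ e 0 → R x y)
    (hr : ∀ x y, e (2 * n) ≤ x → x ≤ y → R x y)
    (hb : ∀ k < n, ∀ x y, e (2 * k + 1) ≤ x → x ≤ y → y ≤ e (2 * k + 2) → R x y)
    (hw : ∀ k < n, ∀ x y, e (2 * k) ≤ x → x ≤ y → y ≤ e (2 * k + 1) → R x y) :
    ∀ x y, x ≤ y → R x y := by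
  have key : ∀ j ≤ 2 * n, ∀ x y, x ≤ y → y ≤ e j → R x y := by
    intro j
    induction j with
    | zero => intro _ x y hxy hy; exact hl x y hxy hy
    | succ j ih =>
      intro hj x y hxy hy
      have cell : ∀ x y, e j ≤ x → x ≤ y → y ≤ e (j + 1) → R x y := by
        rcases Nat.even_or_odd' j with ⟨k, hk | hk⟩
        · subst hk; exact hw k (by omega)
        · subst hk; exact hb k (by omega)
      rcases le_total y (e j) with h1 | h1
      · exact ih (by omega) x y hxy h1
      · rcases le_total (e j) x with h2 | h2
        · exact cell x y h2 hxy hy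
        · exact htr x (e j) y h2 h1 (ih (by omega) x _ h2 le_rfl) (cell _ y le_rfl h1 hy)
  intro x y hxy
  rcases le_total y (e (2 * n)) with h1 | h1
  · exact key _ le_rfl x y hxy h1
  · rcases le_total (e (2 * n)) x with h2 | h2
    · exact hr x y h2 hxy
    · exact htr x (e (2 * n)) y h2 h1 (key _ le_rfl x _ h2 le_rfl) (hr _ y le_rfl h1)

theorem Prof.ml {n e G} (h : Prof n e G) : ML G := by
  apply h.rel
  · rintro x y z hxy hyz ⟨h1, h2⟩ ⟨h3, h4⟩; constructor <;> linarith
  · intro x y hxy hy; have := h.left x y hxy hy; constructor <;> linarith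
  · intro x y hxy hy; have := h.right x y hxy hy; constructor <;> linarith
  · intro k hk x y h1 h2 h3; have := h.black k hk x y h1 h2 h3; constructor <;> linarith
  · intro k hk x y h1 h2 h3; have := h.white k hk x y h1 h2 h3; constructor <;> linarith

theorem Prof.unique {n e G G'} (h : Prof n e G) (h' : Prof n e G') :
    ∀ x y, x ≤ y → G y - G x = G' y - G' x := by
  apply h.rel
  · intro x y z _ _ h1 h2; linarith
  · intro x y hxy hy; rw [h.left x y hxy hy, h'.left x y hxy hy]
  · intro x y hxy hy; rw [h.right x y hxy hy, h'.right x y hxy hy]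
  · intro k hk x y h1 h2 h3; rw [h.black k hk x y h1 h2 h3, h'.black k hk x y h1 h2 h3]
  · intro k hk x y h1 h2 h3; rw [h.white k hk x y h1 h2 h3, h'.white k hk x y h1 h2 h3]

/-- strictly good point -/
def SG (δ : ℝ) (G : ℝ → ℝ) (x : ℝ) : Prop :=
  ∃ w > 0, G (x + w) - G (x - w) < 2 * δ * w ∨ 2 * (1 - δ) * w < G (x + w) - G (x - w)

/-- black interval of maximal density -/
def BM (δ : ℝ) (G : ℝ → ℝ) (x ρ : ℝ) : Prop :=
  0 < ρ ∧ 2 * (1 - δ) * ρ ≤ G (x + ρ) - G (x - ρ) ∧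
    ∀ w > 0, (G (x + w) - G (x - w)) * ρ ≤ (G (x + ρ) - G (x - ρ)) * w

/-- white interval of minimal density -/
def WM (δ : ℝ) (G : ℝ → ℝ) (x ρ : ℝ) : Prop :=
  0 < ρ ∧ G (x + ρ) - G (x - ρ) ≤ 2 * δ * ρ ∧
    ∀ w > 0, (G (x + ρ) - G (x - ρ)) * w ≤ (G (x + w) - G (x - w)) * ρ

def BOK (δ : ℝ) (G : ℝ → ℝ) (x ρ : ℝ) : Prop :=
  0 < ρ ∧ (2 * (1 - δ) * ρ < G (x + ρ) - G (x - ρ) ∨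
    (2 * (1 - δ) * ρ ≤ G (x + ρ) - G (x - ρ) ∧
      ∃ w, 0 < w ∧ w < ρ ∧ G (x + w) - G (x - w) < 2 * δ * w))

def WOK (δ : ℝ) (G : ℝ → ℝ) (x ρ : ℝ) : Prop :=
  0 < ρ ∧ (G (x + ρ) - G (x - ρ) < 2 * δ * ρ ∨
    (G (x + ρ) - G (x - ρ) ≤ 2 * δ * ρ ∧
      ∃ w, 0 < w ∧ w < ρ ∧ 2 * (1 - δ) * w < G (x + w) - G (x - w)))

/-- complement and reflection -/
def starG (G : ℝ → ℝ) (x : ℝ) : ℝ := x + G (-x)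

/-- reflection -/
def refl' (G : ℝ → ℝ) (x : ℝ) : ℝ := -G (-x)

theorem star_diff (G : ℝ → ℝ) (x w : ℝ) :
    starG G (-x + w) - starG G (-x - w) = 2 * w - (G (x + w) - G (x - w)) := by
  unfold starG
  rw [show -(-x + w) = x - w by ring, show -(-x - w) = x + w by ring]; ring

theorem refl_diff (G : ℝ → ℝ) (x w : ℝ) :
    refl' G (-x + w) - refl' G (-x - w) = G (x + w) - G (x - w) := by
  unfold refl'
  rw [show -(-x + w) = x - w by ring, show -(-x - w) = x + w by ring]; ring

theorem starG_starG (G : ℝ → ℝ) : starG (starG G) = G := by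
  funext x; simp [starG]

theorem SG_star {δ G x} : SG δ (starG G) (-x) ↔ SG δ G x := by
  unfold SG
  simp only [star_diff]
  constructor
  · rintro ⟨w, hw, h | h⟩
    · exact ⟨w, hw, Or.inr (by linarith)⟩
    · exact ⟨w, hw, Or.inl (by linarith)⟩
  · rintro ⟨w, hw, h | h⟩
    · exact ⟨w, hw, Or.inr (by linarith)⟩
    · exact ⟨w, hw, Or.inl (by linarith)⟩

theorem SG_refl {δ G x} : SG δ (refl' G) (-x) ↔ SG δ G x := by
  unfold SG; simp only [refl_diff]

theorem BM_star {δ G x ρ} : BM δ (starG G) (-x) ρ ↔ WM δ G x ρ := by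
  unfold BM WM
  simp only [star_diff]
  constructor
  · rintro ⟨h1, h2, h3⟩
    exact ⟨h1, by linarith, fun w hw => by have := h3 w hw; nlinarith⟩
  · rintro ⟨h1, h2, h3⟩
    exact ⟨h1, by linarith, fun w hw => by have := h3 w hw; nlinarith⟩

theorem WM_star {δ G x ρ} : WM δ (starG G) (-x) ρ ↔ BM δ G x ρ := by
  have := @BM_star δ (starG G) (-x) ρ
  rw [starG_starG, neg_neg] at this; exact this.symm

theorem BOK_star {δ G x ρ} : BOK δ (starG G) (-x) ρ ↔ WOK δ G x ρ := by
  unfold BOK WOK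
  simp only [star_diff]
  constructor
  · rintro ⟨h1, h2 | ⟨h2, w, hw, hw2, h3⟩⟩
    · exact ⟨h1, Or.inl (by linarith)⟩
    · exact ⟨h1, Or.inr ⟨by linarith, w, hw, hw2, by linarith⟩⟩
  · rintro ⟨h1, h2 | ⟨h2, w, hw, hw2, h3⟩⟩
    · exact ⟨h1, Or.inl (by linarith)⟩
    · exact ⟨h1, Or.inr ⟨by linarith, w, hw, hw2, by linarith⟩⟩

theorem WOK_star {δ G x ρ} : WOK δ (starG G) (-x) ρ ↔ BOK δ G x ρ := by
  have := @BOK_star δ (starG G) (-x) ρ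
  rw [starG_starG, neg_neg] at this; exact this.symm

theorem ML_star {G} (h : ML G) : ML (starG G) := by
  intro x y hxy
  have := h (-y) (-x) (by linarith)
  unfold starG; constructor <;> linarith

theorem ML_refl {G} (h : ML G) : ML (refl' G) := by
  intro x y hxy
  have := h (-y) (-x) (by linarith)
  unfold refl'; constructor <;> linarith

/-- black left of `u`, white right of `t`, unchanged in between -/
noncomputable def cut (G : ℝ → ℝ) (u t x : ℝ) : ℝ :=
  if x ≤ u then G u - (u - x) else if x ≤ t then G x else G t

theorem cut_left {G u t x} (h : x ≤ u) : cut G u t x = G u - (u - x) := if_pos h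

theorem cut_mid {G u t x} (h : u ≤ x) (h2 : x ≤ t) : cut G u t x = G x := by
  rcases h.eq_or_lt with h1 | h1
  · subst h1; rw [cut_left le_rfl]; ring
  · rw [cut, if_neg (not_le.mpr h1), if_pos h2]

theorem cut_right {G u t x} (hut : u ≤ t) (h : t ≤ x) : cut G u t x = G t := by
  rcases h.eq_or_lt with h1 | h1
  · subst h1; exact cut_mid hut le_rfl
  · rw [cut, if_neg (by linarith), if_neg (by linarith)]

theorem star_cut {G u t} (hut : u ≤ t) : starG (cut G u t) = cut (starG G) (-t) (-u) := by
  funext x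
  unfold starG
  rcases le_total x (-t) with h | h
  · rw [cut_left h, cut_right hut (by linarith)]; simp; ring
  · rcases le_total x (-u) with h2 | h2
    · rw [cut_mid h h2, cut_mid (by linarith) (by linarith)]
    · rw [cut_right (by linarith) h2, cut_left (by linarith)]; simp; ring

theorem core_a {δ G u t x ρ} (hG : ML G) (hux : u ≤ x) (h : BOK δ G x ρ)
    (hxt : x + ρ ≤ t) : SG δ (cut G u t) x := by
  obtain ⟨hρ, h⟩ := h
  have e1 : cut G u t (x + ρ) = G (x + ρ) := cut_mid (by linarith) hxt
  have e2 : cut G u t (x - ρ) ≤ G (x - ρ) := by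
    rcases le_total (x - ρ) u with h1 | h1
    · rw [cut_left h1]; have := hG _ _ h1; linarith
    · rw [cut_mid h1 (by linarith)]
  rcases h with h | ⟨h, w, hw, hwρ, h3⟩
  · exact ⟨ρ, hρ, Or.inr (by linarith)⟩
  · rcases e2.lt_or_eq with h4 | h4
    · exact ⟨ρ, hρ, Or.inr (by linarith)⟩
    · refine ⟨w, hw, Or.inl ?_⟩
      rw [cut_mid (x := x + w) (by linarith) (by linarith)]
      have : cut G u t (x - w) = G (x - w) := by
        rcases le_total (x - w) u with h5 | h5
        · rw [cut_left h5]
          rw [cut_left (by linarith)] at h4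
          have h6 := hG _ _ h5
          have h7 := hG (x - ρ) (x - w) (by linarith)
          linarith
        · rw [cut_mid h5 (by linarith)]
      rw [this]; exact h3

theorem core_b {δ G u t x ρ} (hG : ML G) (hxt : x ≤ t) (h : WOK δ G x ρ)
    (hux : u ≤ x - ρ) : SG δ (cut G u t) x := by
  rw [← SG_star, star_cut (by linarith [h.1])]
  exact core_a (ρ := ρ) (ML_star hG) (by linarith) (BOK_star.mpr h) (by linarith)

theorem core_c {δ G u t x p ρ} (hδ : 0 < δ) (hG : ML G) (hux : u ≤ x) (hxp : x < p)
    (h : BM δ G p ρ) (hpu : p - ρ < u) (hpt : p + ρ ≤ t) : SG δ (cut G u t) x := by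
  obtain ⟨hρ, h, -⟩ := h
  refine ⟨p + ρ - x, by linarith, Or.inr ?_⟩
  rw [show x + (p + ρ - x) = p + ρ by ring, cut_mid (by linarith) hpt, cut_left (by linarith)]
  have := hG (p - ρ) u hpu.le
  nlinarith [mul_pos hδ (sub_pos.mpr hxp)]

theorem core_d {δ G u t x p ρ} (hδ : 0 < δ) (hG : ML G) (hxt : x ≤ t) (hxp : p < x)
    (h : WM δ G p ρ) (hpu : t < p + ρ) (hpt : u ≤ p - ρ) : SG δ (cut G u t) x := by
  have := h.1
  rw [← SG_star, star_cut (by linarith)]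
  exact core_c (p := -p) (ρ := ρ) hδ (ML_star hG) (by linarith) (by linarith) (BM_star.mpr h)
    (by linarith) (by linarith)

/-! ### Abstract systems -/

/-- the maximal open interval property -/
def IsComp (U : Set ℝ) (s t : ℝ) : Prop := s < t ∧ (∀ x, s < x → x < t → x ∈ U) ∧ s ∉ U ∧ t ∉ U

/-- `x` lies in the interval of radius `p.2` about `p.1` -/
def InI (p : ℝ × ℝ) (x : ℝ) : Prop := p.1 - p.2 < x ∧ x < p.1 + p.2

def UB (r : ℕ) (E : ℕ → ℝ) (P : Set (ℝ × ℝ)) : Set ℝ :=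
  {x | ∃ p ∈ P, InI p x ∨ ∃ k < r, E (2 * k + 1) < x ∧ x < E (2 * k + 2) ∧
    ∃ y, InI p y ∧ E (2 * k + 1) < y ∧ y < E (2 * k + 2)}

def UW (r : ℕ) (E : ℕ → ℝ) (P : Set (ℝ × ℝ)) : Set ℝ :=
  {x | ∃ p ∈ P, InI p x ∨ ∃ k < r, E (2 * k) < x ∧ x < E (2 * k + 1) ∧
    ∃ y, InI p y ∧ E (2 * k) < y ∧ y < E (2 * k + 1)}

structure Sys (δ : ℝ) (r : ℕ) (E : ℕ → ℝ) (G : ℝ → ℝ) (vB vW : ℝ) (P Q : Set (ℝ × ℝ)) :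
    Prop where
  hδ1 : 0 < δ
  hδ2 : δ < 1 / 2
  hr : 0 < r
  prof : Prof r E G
  H : ∀ n < r, ∀ e G', Prof n e G' → ∃ i ≤ 2 * n, ¬ SG δ G' (e i)
  gB : (vB - E 0) + (1 - 2 * δ) * (E (2 * r) - vB) ≤ G (E (2 * r)) - G (E 0)
  gW : G (E (2 * r)) - G (E 0) ≤ 2 * δ * (vW - E 0)
  mB : ∀ i ≤ 2 * r, E i - E 0 < E (2 * r) - E i →
    (E i - E 0) + (1 - 2 * δ) * (E (2 * r) - E i) ≤ G (E (2 * r)) - G (E 0) → E i ≤ vB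
  mW : ∀ i ≤ 2 * r, E (2 * r) - E i < E i - E 0 →
    G (E (2 * r)) - G (E 0) ≤ 2 * δ * (E i - E 0) → vW ≤ E i
  midB : 2 * vB ≤ E 0 + E (2 * r)
  midW : E 0 + E (2 * r) ≤ 2 * vW
  loB : E 0 ≤ vB
  hiW : vW ≤ E (2 * r)
  hP : ∀ p ∈ P, (∃ i ≤ 2 * r, p.1 = E i) ∧ vB < p.1 ∧ p.1 < vW ∧ BM δ G p.1 p.2
  hQ : ∀ p ∈ Q, (∃ i ≤ 2 * r, p.1 = E i) ∧ vB < p.1 ∧ p.1 < vW ∧ WM δ G p.1 p.2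
  cov : ∀ i ≤ 2 * r, vB < E i → E i < vW →
    (∃ ρ, (E i, ρ) ∈ P ∧ BOK δ G (E i) ρ) ∨ (∃ ρ, (E i, ρ) ∈ Q ∧ WOK δ G (E i) ρ)

def Estar (r : ℕ) (E : ℕ → ℝ) (i : ℕ) : ℝ := -E (2 * r - i)

def Pstar (P : Set (ℝ × ℝ)) : Set (ℝ × ℝ) := {p | (-p.1, p.2) ∈ P}

theorem Prof.starP {n e G} (h : Prof n e G) : Prof n (Estar n e) (starG G) := by
  constructor
  · intro i hi
    unfold Estar
    exact neg_lt_neg (h.lt (by omega) (by omega))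
  · intro x y hxy hy
    unfold Estar at hy
    have := h.right (-y) (-x) (by rw [Nat.sub_zero] at hy; linarith) (by linarith)
    unfold starG; linarith
  · intro x y hx hxy
    unfold Estar at hx
    rw [Nat.sub_self] at hx
    have := h.left (-y) (-x) (by linarith) (by linarith)
    unfold starG; linarith
  · intro k hk x y hx hxy hy
    unfold Estar at hx hy
    rw [show 2 * n - (2 * k + 1) = 2 * (n - 1 - k) + 1 by omega] at hx
    rw [show 2 * n - (2 * k + 2) = 2 * (n - 1 - k) by omega] at hy
    have := h.white (n - 1 - k) (by omega) (-y) (-x) (by linarith) (by linarith) (by linarith)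
    unfold starG; linarith
  · intro k hk x y hx hxy hy
    unfold Estar at hx hy
    rw [show 2 * n - (2 * k) = 2 * (n - 1 - k) + 2 by omega] at hx
    rw [show 2 * n - (2 * k + 1) = 2 * (n - 1 - k) + 1 by omega] at hy
    have := h.black (n - 1 - k) (by omega) (-y) (-x) (by linarith) (by linarith) (by linarith)
    unfold starG; linarith

theorem Sys.starS {δ r E G vB vW P Q} (S : Sys δ r E G vB vW P Q) :
    Sys δ r (Estar r E) (starG G) (-vW) (-vB) (Pstar Q) (Pstar P) := by
  have e0 : Estar r E 0 = -E (2 * r) := by simp [Estar]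
  have e1 : Estar r E (2 * r) = -E 0 := by simp [Estar]
  have g0 : starG G (-E (2 * r)) = -E (2 * r) + G (E (2 * r)) := by simp [starG]
  have g1 : starG G (-E 0) = -E 0 + G (E 0) := by simp [starG]
  constructor
  · exact S.hδ1
  · exact S.hδ2
  · exact S.hr
  · exact S.prof.starP
  · exact S.H
  · rw [e0, e1, g0, g1]; linarith [S.gW]
  · rw [e0, e1, g0, g1]; linarith [S.gB]
  · intro i hi h1 h2
    rw [e0, e1] at h1
    rw [e0, e1, g0, g1] at h2
    unfold Estar at h1 h2 ⊢
    have := S.mW (2 * r - i) (by omega) (by linarith) (by linarith)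
    linarith
  · intro i hi h1 h2
    rw [e0, e1] at h1
    rw [e0, e1, g0, g1] at h2
    unfold Estar at h1 h2 ⊢
    have := S.mB (2 * r - i) (by omega) (by linarith) (by linarith)
    linarith
  · rw [e0, e1]; linarith [S.midW]
  · rw [e0, e1]; linarith [S.midB]
  · rw [e0]; linarith [S.hiW]
  · rw [e1]; linarith [S.loB]
  · rintro ⟨x, ρ⟩ hp
    obtain ⟨⟨i, hi, h1⟩, h2, h3, h4⟩ := S.hQ (-x, ρ) hp
    dsimp only at *
    refine ⟨⟨2 * r - i, by omega, ?_⟩, by linarith, by linarith, ?_⟩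
    · unfold Estar; rw [show 2 * r - (2 * r - i) = i by omega]; linarith
    · have := BM_star.mpr h4; rwa [neg_neg] at this
  · rintro ⟨x, ρ⟩ hp
    obtain ⟨⟨i, hi, h1⟩, h2, h3, h4⟩ := S.hP (-x, ρ) hp
    dsimp only at *
    refine ⟨⟨2 * r - i, by omega, ?_⟩, by linarith, by linarith, ?_⟩
    · unfold Estar; rw [show 2 * r - (2 * r - i) = i by omega]; linarith
    · have := WM_star.mpr h4; rwa [neg_neg] at this
  · intro i hi h1 h2
    unfold Estar at *
    rcases S.cov (2 * r - i) (by omega) (by linarith) (by linarith) with ⟨ρ, h3, h4⟩ | ⟨ρ, h3, h4⟩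
    · exact Or.inr ⟨ρ, by simpa [Pstar] using h3, WOK_star.mpr h4⟩
    · exact Or.inl ⟨ρ, by simpa [Pstar] using h3, BOK_star.mpr h4⟩

theorem mem_UB_star {r E Q x} : -x ∈ UB r (Estar r E) (Pstar Q) ↔ x ∈ UW r E Q := by
  constructor
  · rintro ⟨⟨p, ρ⟩, hp, h⟩
    refine ⟨(-p, ρ), hp, ?_⟩
    unfold InI at *
    dsimp only at *
    rcases h with h | ⟨k, hk, h1, h2, y, hy, hy1, hy2⟩
    · left; constructor <;> linarith
    · right
      unfold Estar at h1 h2 hy1 hy2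
      rw [show 2 * r - (2 * k + 1) = 2 * (r - 1 - k) + 1 by omega] at h1 hy1
      rw [show 2 * r - (2 * k + 2) = 2 * (r - 1 - k) by omega] at h2 hy2
      exact ⟨r - 1 - k, by omega, by linarith, by linarith, -y,
        ⟨by linarith, by linarith⟩, by linarith, by linarith⟩
  · rintro ⟨⟨p, ρ⟩, hp, h⟩
    refine ⟨(-p, ρ), by simpa [Pstar] using hp, ?_⟩
    unfold InI at *
    dsimp only at *
    rcases h with h | ⟨k, hk, h1, h2, y, hy, hy1, hy2⟩
    · left; constructor <;> linarith
    · right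
      refine ⟨r - 1 - k, by omega, ?_⟩
      unfold Estar
      rw [show 2 * r - (2 * (r - 1 - k) + 1) = 2 * k + 1 by omega]
      rw [show 2 * r - (2 * (r - 1 - k) + 2) = 2 * k by omega]
      exact ⟨by linarith, by linarith, -y, ⟨by linarith, by linarith⟩, by linarith, by linarith⟩

theorem mem_UW_star {r E P x} : -x ∈ UW r (Estar r E) (Pstar P) ↔ x ∈ UB r E P := by
  constructor
  · rintro ⟨⟨p, ρ⟩, hp, h⟩
    refine ⟨(-p, ρ), hp, ?_⟩
    unfold InI at *
    dsimp only at *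
    rcases h with h | ⟨k, hk, h1, h2, y, hy, hy1, hy2⟩
    · left; constructor <;> linarith
    · right
      unfold Estar at h1 h2 hy1 hy2
      rw [show 2 * r - (2 * k) = 2 * (r - 1 - k) + 2 by omega] at h1 hy1
      rw [show 2 * r - (2 * k + 1) = 2 * (r - 1 - k) + 1 by omega] at h2 hy2
      exact ⟨r - 1 - k, by omega, by linarith, by linarith, -y,
        ⟨by linarith, by linarith⟩, by linarith, by linarith⟩
  · rintro ⟨⟨p, ρ⟩, hp, h⟩
    refine ⟨(-p, ρ), by simpa [Pstar] using hp, ?_⟩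
    unfold InI at *
    dsimp only at *
    rcases h with h | ⟨k, hk, h1, h2, y, hy, hy1, hy2⟩
    · left; constructor <;> linarith
    · right
      refine ⟨r - 1 - k, by omega, ?_⟩
      unfold Estar
      rw [show 2 * r - (2 * (r - 1 - k)) = 2 * k + 2 by omega]
      rw [show 2 * r - (2 * (r - 1 - k) + 1) = 2 * k + 1 by omega]
      exact ⟨by linarith, by linarith, -y, ⟨by linarith, by linarith⟩, by linarith, by linarith⟩

theorem IsComp.neg {U V : Set ℝ} (h : ∀ x, -x ∈ V ↔ x ∈ U) {s t} (hc : IsComp U s t) :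
    IsComp V (-t) (-s) := by
  obtain ⟨h1, h2, h3, h4⟩ := hc
  refine ⟨by linarith, fun x hx hy => ?_, ?_, ?_⟩
  · have := (h (-x)).mpr (h2 (-x) (by linarith) (by linarith)); rwa [neg_neg] at this
  · rwa [h]
  · rwa [h]

/-- cell location, half-open to the left -/
theorem Prof.loc {n e G} (h : Prof n e G) (x : ℝ) :
    x ≤ e 0 ∨ (∃ k < n, e (2 * k) < x ∧ x ≤ e (2 * k + 1)) ∨
      (∃ k < n, e (2 * k + 1) < x ∧ x ≤ e (2 * k + 2)) ∨ e (2 * n) < x := by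
  have key : ∀ j ≤ 2 * n, x ≤ e j → x ≤ e 0 ∨ (∃ k < n, e (2 * k) < x ∧ x ≤ e (2 * k + 1)) ∨
      (∃ k < n, e (2 * k + 1) < x ∧ x ≤ e (2 * k + 2)) := by
    intro j
    induction j with
    | zero => intro _ h; exact Or.inl h
    | succ j ih =>
      intro hj hx
      rcases le_or_gt x (e j) with h1 | h1
      · exact ih (by omega) h1
      · rcases Nat.even_or_odd' j with ⟨k, hk | hk⟩
        · subst hk; exact Or.inr (Or.inl ⟨k, by omega, h1, hx⟩)
        · subst hk; exact Or.inr (Or.inr ⟨k, by omega, h1, hx⟩)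
  rcases le_or_gt x (e (2 * n)) with h1 | h1
  · rcases key _ le_rfl h1 with h | h | h
    · exact Or.inl h
    · exact Or.inr (Or.inl h)
    · exact Or.inr (Or.inr (Or.inl h))
  · exact Or.inr (Or.inr (Or.inr h1))

/-- cell location, half-open to the right -/
theorem Prof.loc' {n e G} (h : Prof n e G) (x : ℝ) :
    x < e 0 ∨ (∃ k < n, e (2 * k) ≤ x ∧ x < e (2 * k + 1)) ∨
      (∃ k < n, e (2 * k + 1) ≤ x ∧ x < e (2 * k + 2)) ∨ e (2 * n) ≤ x := by
  have key : ∀ j ≤ 2 * n, x < e j → x < e 0 ∨ (∃ k < n, e (2 * k) ≤ x ∧ x < e (2 * k + 1)) ∨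
      (∃ k < n, e (2 * k + 1) ≤ x ∧ x < e (2 * k + 2)) := by
    intro j
    induction j with
    | zero => intro _ h; exact Or.inl h
    | succ j ih =>
      intro hj hx
      rcases lt_or_ge x (e j) with h1 | h1
      · exact ih (by omega) h1
      · rcases Nat.even_or_odd' j with ⟨k, hk | hk⟩
        · subst hk; exact Or.inr (Or.inl ⟨k, by omega, h1, hx⟩)
        · subst hk; exact Or.inr (Or.inr ⟨k, by omega, h1, hx⟩)
  rcases lt_or_ge x (e (2 * n)) with h1 | h1
  · rcases key _ le_rfl h1 with h | h | h
    · exact Or.inl h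
    · exact Or.inr (Or.inl h)
    · exact Or.inr (Or.inr (Or.inl h))
  · exact Or.inr (Or.inr (Or.inr h1))

/-- no point is in two cells -/
theorem Prof.cell_unique {n e G} (h : Prof n e G) {i j : ℕ} {x : ℝ} (hi : i + 1 ≤ 2 * n)
    (hj : j + 1 ≤ 2 * n) (h1 : e i < x) (h2 : x < e (i + 1)) (h3 : e j ≤ x) (h4 : x ≤ e (j + 1)) :
    i = j := by
  have a1 := (h.lt_iff (by omega) hj).mp (h1.trans_le h4)
  have a2 := (h.lt_iff (by omega) hi).mp (h3.trans_lt h2)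
  omega

theorem BM.left {δ G x ρ} (hδ : δ < 1 / 2) (hG : ML G) (h : BM δ G x ρ) {z : ℝ}
    (hz : x - ρ < z) : G (x - ρ) < G z := by
  obtain ⟨hρ, h1, h2⟩ := h
  by_contra hc
  obtain ⟨z', hz1, hz2, hz3⟩ : ∃ z', x - ρ < z' ∧ z' ≤ z ∧ z' < x := by
    refine ⟨min z ((x - ρ + x) / 2), lt_min hz (by linarith), min_le_left _ _, ?_⟩
    exact (min_le_right _ _).trans_lt (by linarith)
  have a1 := hG (x - ρ) z' hz1.le
  have a2 := hG z' z hz2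
  have a3 := h2 (x - z') (by linarith)
  rw [show x - (x - z') = z' by ring] at a3
  have a4 := hG (x + (x - z')) (x + ρ) (by linarith)
  have e : G z' = G (x - ρ) := by linarith
  rw [e] at a3
  have hD : ρ < G (x + ρ) - G (x - ρ) := by nlinarith
  have a5 : (G (x + ρ) - G (x - ρ) - (ρ - (x - z'))) * ρ ≤
      (G (x + ρ) - G (x - ρ)) * (x - z') := by
    refine le_trans (mul_le_mul_of_nonneg_right ?_ hρ.le) a3
    linarith
  have hε : 0 < ρ - (x - z') := by linarith
  nlinarith [mul_pos hε (sub_pos.mpr hD)]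

theorem BM.right {δ G x ρ} (hδ : δ < 1 / 2) (hG : ML G) (h : BM δ G x ρ) {z : ℝ}
    (hz : z < x + ρ) : G z < G (x + ρ) := by
  obtain ⟨hρ, h1, h2⟩ := h
  by_contra hc
  obtain ⟨z', hz1, hz2, hz3⟩ : ∃ z', z' < x + ρ ∧ z ≤ z' ∧ x < z' := by
    refine ⟨max z ((x + ρ + x) / 2), max_lt hz (by linarith), le_max_left _ _, ?_⟩
    exact lt_of_lt_of_le (by linarith) (le_max_right _ _)
  have a1 := hG z' (x + ρ) hz1.le
  have a2 := hG z z' hz2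
  have a3 := h2 (z' - x) (by linarith)
  rw [show x + (z' - x) = z' by ring] at a3
  have a4 := hG (x - ρ) (x - (z' - x)) (by linarith)
  have e : G z' = G (x + ρ) := by linarith
  rw [e] at a3
  have hD : ρ < G (x + ρ) - G (x - ρ) := by nlinarith
  have a5 : (G (x + ρ) - G (x - ρ) - (ρ - (z' - x))) * ρ ≤
      (G (x + ρ) - G (x - ρ)) * (z' - x) := by
    refine le_trans (mul_le_mul_of_nonneg_right ?_ hρ.le) a3
    linarith
  have hε : 0 < ρ - (z' - x) := by linarith
  nlinarith [mul_pos hε (sub_pos.mpr hD)]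

/-! ### Geometry of components -/

section
variable {δ : ℝ} {r : ℕ} {E : ℕ → ℝ} {G : ℝ → ℝ} {vB vW : ℝ} {P Q : Set (ℝ × ℝ)}

theorem Sys.pos (S : Sys δ r E G vB vW P Q) {p} (hp : p ∈ P) : 0 < p.2 := (S.hP p hp).2.2.2.1
theorem Sys.posQ (S : Sys δ r E G vB vW P Q) {p} (hp : p ∈ Q) : 0 < p.2 := (S.hQ p hp).2.2.2.1

theorem Sys.reach (S : Sys δ r E G vB vW P Q) {p} (hp : p ∈ P) : p.1 + p.2 ≤ E (2 * r) := by
  by_contra hc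
  have := (S.hP p hp).2.2.2.right S.hδ2 S.prof.ml (not_le.mp hc)
  have := S.prof.right _ _ le_rfl (not_le.mp hc).le
  linarith

/-- an interval of the family meeting a component lies in it -/
theorem comp_contains (S : Sys δ r E G vB vW P Q) {s t} (hc : IsComp (UB r E P) s t) {p}
    (hp : p ∈ P) {x} (hx : InI p x) (h1 : s < x) (h2 : x < t) : s ≤ p.1 - p.2 ∧ p.1 + p.2 ≤ t := by
  constructor
  · by_contra h
    exact hc.2.2.1 ⟨p, hp, Or.inl ⟨not_le.mp h, h1.trans hx.2⟩⟩
  · by_contra h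
    exact hc.2.2.2 ⟨p, hp, Or.inl ⟨hx.1.trans h2, not_le.mp h⟩⟩

theorem endB_right (S : Sys δ r E G vB vW P Q) {s t} (hc : IsComp (UB r E P) s t) :
    ∃ k < r, t = E (2 * k + 2) := by
  have hc' := hc
  obtain ⟨hst, hin, hs, ht⟩ := hc
  rcases S.prof.loc t with h | ⟨k, hk, h1, h2⟩ | ⟨k, hk, h1, h2⟩ | h
  · exfalso
    obtain ⟨x, hx1, hx2⟩ := exists_between hst
    obtain ⟨p, hp, hx | ⟨k, hk, h3, h4, -⟩⟩ := hin x hx1 hx2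
    · have := (comp_contains S hc' hp hx hx1 hx2).2
      have := S.pos hp
      have := S.hP p hp
      linarith [S.loB]
    · have := S.prof.le (i := 0) (j := 2 * k + 1) (by omega) (by omega)
      linarith
  · exfalso
    obtain ⟨x, hx1, hx2⟩ := exists_between (max_lt hst h1)
    have hsx := (le_max_left _ _).trans_lt hx1
    have hex := (le_max_right _ _).trans_lt hx1
    obtain ⟨p, hp, hx | ⟨l, hl, h3, h4, -⟩⟩ := hin x hsx hx2
    · have a1 := (comp_contains S hc' hp hx hsx hx2).2
      have a2 := (S.hP p hp).2.2.2.right S.hδ2 S.prof.ml hx.2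
      have a3 := S.prof.white k hk x (p.1 + p.2) hex.le hx.2.le (by linarith)
      linarith
    · have := S.prof.cell_unique (i := 2 * l + 1) (j := 2 * k) (by omega) (by omega) h3 h4 hex.le
        (by linarith)
      omega
  · refine ⟨k, hk, ?_⟩
    by_contra hne
    have h2 : t < E (2 * k + 2) := lt_of_le_of_ne h2 hne
    obtain ⟨x, hx1, hx2⟩ := exists_between (max_lt hst h1)
    have hsx := (le_max_left _ _).trans_lt hx1
    have hex := (le_max_right _ _).trans_lt hx1
    obtain ⟨p, hp, hx | ⟨l, hl, h3, h4, h5⟩⟩ := hin x hsx hx2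
    · exact ht ⟨p, hp, Or.inr ⟨k, hk, h1, h2, x, hx, hex, by linarith⟩⟩
    · have := S.prof.cell_unique (i := 2 * l + 1) (j := 2 * k + 1) (by omega) (by omega) h3 h4
        hex.le (by linarith : x ≤ E (2 * k + 2))
      obtain rfl : l = k := by omega
      exact ht ⟨p, hp, Or.inr ⟨l, hk, h1, h2, h5⟩⟩
  · exfalso
    obtain ⟨x, hx1, hx2⟩ := exists_between (max_lt hst h)
    have hsx := (le_max_left _ _).trans_lt hx1
    have hex := (le_max_right _ _).trans_lt hx1
    obtain ⟨p, hp, hx | ⟨l, hl, h3, h4, -⟩⟩ := hin x hsx hx2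
    · have := S.reach hp
      linarith [hx.2]
    · have := S.prof.le (i := 2 * l + 2) (j := 2 * r) (by omega) (by omega)
      linarith

theorem endB_left (S : Sys δ r E G vB vW P Q) {s t} (hc : IsComp (UB r E P) s t) :
    s < E 0 ∨ ∃ k < r, s = E (2 * k + 1) := by
  have hc' := hc
  obtain ⟨k', hk', ht'⟩ := endB_right S hc
  obtain ⟨hst, hin, hs, ht⟩ := hc
  rcases S.prof.loc' s with h | ⟨k, hk, h1, h2⟩ | ⟨k, hk, h1, h2⟩ | h
  · exact Or.inl h
  · exfalso
    obtain ⟨x, hx1, hx2⟩ := exists_between (lt_min hst h2)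
    have hxt := hx2.trans_le (min_le_left _ _)
    have hxe := hx2.trans_le (min_le_right _ _)
    obtain ⟨p, hp, hx | ⟨l, hl, h3, h4, -⟩⟩ := hin x hx1 hxt
    · have a1 := (comp_contains S hc' hp hx hx1 hxt).1
      have a2 := (S.hP p hp).2.2.2.left S.hδ2 S.prof.ml hx.1
      have a3 := S.prof.white k hk (p.1 - p.2) x (by linarith) hx.1.le (by linarith)
      linarith
    · have := S.prof.cell_unique (i := 2 * l + 1) (j := 2 * k) (by omega) (by omega) h3 h4
        (by linarith) (by linarith)
      omega
  · refine Or.inr ⟨k, hk, ?_⟩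
    by_contra hne
    have h1 : E (2 * k + 1) < s := lt_of_le_of_ne h1 (Ne.symm hne)
    obtain ⟨x, hx1, hx2⟩ := exists_between (lt_min hst h2)
    have hxt := hx2.trans_le (min_le_left _ _)
    have hxe := hx2.trans_le (min_le_right _ _)
    obtain ⟨p, hp, hx | ⟨l, hl, h3, h4, h5⟩⟩ := hin x hx1 hxt
    · exact hs ⟨p, hp, Or.inr ⟨k, hk, h1, h2, x, hx, by linarith, by linarith⟩⟩
    · have := S.prof.cell_unique (i := 2 * l + 1) (j := 2 * k + 1) (by omega) (by omega) h3 h4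
        (by linarith) (by linarith : x ≤ E (2 * k + 2))
      obtain rfl : l = k := by omega
      exact hs ⟨p, hp, Or.inr ⟨l, hk, h1, h2, h5⟩⟩
  · exfalso
    have := S.prof.le (i := 2 * k' + 2) (j := 2 * r) (by omega) (by omega)
    linarith

theorem comp_center (S : Sys δ r E G vB vW P Q) {s t} (hc : IsComp (UB r E P) s t) :
    ∃ p ∈ P, s < p.1 ∧ p.1 < t := by
  have hc' := hc
  obtain ⟨hst, hin, hs, ht⟩ := hc
  have key : ∃ p ∈ P, ∃ x, InI p x ∧ s < x ∧ x < t := by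
    obtain ⟨x, hx1, hx2⟩ := exists_between hst
    obtain ⟨p, hp, hx | ⟨l, hl, h3, h4, y, hy, hy1, hy2⟩⟩ := hin x hx1 hx2
    · exact ⟨p, hp, x, hx, hx1, hx2⟩
    · refine ⟨p, hp, y, hy, ?_, ?_⟩
      · by_contra h
        exact hs ⟨p, hp, Or.inr ⟨l, hl, by linarith, by linarith, y, hy, hy1, hy2⟩⟩
      · by_contra h
        exact ht ⟨p, hp, Or.inr ⟨l, hl, by linarith, by linarith, y, hy, hy1, hy2⟩⟩
  obtain ⟨p, hp, x, hx, h1, h2⟩ := key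
  have := comp_contains S hc' hp hx h1 h2
  have := S.pos hp
  exact ⟨p, hp, by linarith, by linarith⟩

theorem endW_left (S : Sys δ r E G vB vW P Q) {u v} (hc : IsComp (UW r E Q) u v) :
    ∃ k < r, u = E (2 * k) := by
  obtain ⟨k, hk, h⟩ := endB_right S.starS (hc.neg (fun x => mem_UB_star))
  refine ⟨r - 1 - k, by omega, ?_⟩
  unfold Estar at h
  rw [show 2 * r - (2 * k + 2) = 2 * (r - 1 - k) by omega] at h
  linarith

theorem endW_right (S : Sys δ r E G vB vW P Q) {u v} (hc : IsComp (UW r E Q) u v) :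
    E (2 * r) < v ∨ ∃ k < r, v = E (2 * k + 1) := by
  rcases endB_left S.starS (hc.neg (fun x => mem_UB_star)) with h | ⟨k, hk, h⟩
  · left; simp [Estar] at h; exact h
  · right
    refine ⟨r - 1 - k, by omega, ?_⟩
    unfold Estar at h
    rw [show 2 * r - (2 * k + 1) = 2 * (r - 1 - k) + 1 by omega] at h
    linarith

theorem comp_centerW (S : Sys δ r E G vB vW P Q) {u v} (hc : IsComp (UW r E Q) u v) :
    ∃ q ∈ Q, u < q.1 ∧ q.1 < v := by
  obtain ⟨p, hp, h1, h2⟩ := comp_center S.starS (hc.neg (fun x => mem_UB_star))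
  exact ⟨(-p.1, p.2), hp, by dsimp only; linarith, by dsimp only; linarith⟩

/-- endpoints in `UB` are in an interval of the family -/
theorem cover_B (S : Sys δ r E G vB vW P Q) {i : ℕ} (hi : i ≤ 2 * r) (h : E i ∈ UB r E P) :
    ∃ p ∈ P, InI p (E i) := by
  obtain ⟨p, hp, h | ⟨k, hk, h1, h2, -⟩⟩ := h
  · exact ⟨p, hp, h⟩
  · have a := (S.prof.lt_iff (by omega) (by omega)).mp h1
    have b := (S.prof.lt_iff (by omega) (by omega)).mp h2
    omega

theorem cover_W (S : Sys δ r E G vB vW P Q) {i : ℕ} (hi : i ≤ 2 * r) (h : E i ∈ UW r E Q) :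
    ∃ p ∈ Q, InI p (E i) := by
  obtain ⟨p, hp, h | ⟨k, hk, h1, h2, -⟩⟩ := h
  · exact ⟨p, hp, h⟩
  · have a := (S.prof.lt_iff (by omega) (by omega)).mp h1
    have b := (S.prof.lt_iff (by omega) (by omega)).mp h2
    omega

theorem ML.cont (hG : ML G) : Continuous G := by
  apply LipschitzWith.continuous (K := 1)
  apply LipschitzWith.of_le_add
  intro x y
  rw [Real.dist_eq]
  rcases le_total x y with h | h
  · have := (hG x y h).1; have := abs_nonneg (x - y); linarith
  · have := (hG y x h).2; have := le_abs_self (x - y); linarith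

/-- suffixes of black components are dense -/
theorem suffix (S : Sys δ r E G vB vW P Q) {s t} (hc : IsComp (UB r E P) s t) {x} (h1 : s < x)
    (h2 : x ≤ t) : (1 - 2 * δ) * (t - x) ≤ G t - G x := by
  have hcont := S.prof.ml.cont
  have hcpt : IsCompact (Icc x t ∩ {z | (1 - 2 * δ) * (z - x) ≤ G z - G x}) :=
    isCompact_Icc.inter_right (isClosed_le (by fun_prop) (by fun_prop))
  obtain ⟨z, ⟨⟨hz1, hz2⟩, hz3⟩, hz4⟩ :=
    hcpt.exists_isGreatest ⟨x, ⟨le_rfl, h2⟩, by simp⟩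
  rcases hz2.eq_or_lt with h | h
  · subst h; exact hz3
  exfalso
  have step : ∃ y, z < y ∧ y ≤ t ∧ (1 - 2 * δ) * (y - z) ≤ G y - G z := by
    obtain ⟨p, hp, hz | ⟨k, hk, h3, h4, h5⟩⟩ := hc.2.1 z (by linarith) h
    · refine ⟨p.1 + p.2, hz.2, (comp_contains S hc hp hz (by linarith) h).2, ?_⟩
      obtain ⟨hρ, hb, hm⟩ := (S.hP p hp).2.2.2
      have hδ := S.hδ1
      have hδ2 := S.hδ2
      rcases le_or_gt z p.1 with h6 | h6
      · have := S.prof.ml _ _ hz.1.le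
        nlinarith
      · have a := hm (z - p.1) (by linarith)
        rw [show p.1 + (z - p.1) = z by ring] at a
        have b := S.prof.ml (p.1 - p.2) (p.1 - (z - p.1)) (by linarith [hz.2])
        have hpos : 0 < p.1 + p.2 - z := by linarith [hz.2]
        have c : (2 * (1 - δ) * p.2) * (p.1 + p.2 - z) ≤
          (G (p.1 + p.2) - G (p.1 - p.2)) * (p.1 + p.2 - z) :=
          mul_le_mul_of_nonneg_right hb hpos.le
        have d : p.2 * (2 * (1 - δ) * (p.1 + p.2 - z)) ≤
          p.2 * ((G (p.1 + p.2) - G (p.1 - p.2)) - (G z - G (p.1 - (z - p.1)))) := by nlinarith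
        have := le_of_mul_le_mul_left d hρ
        linarith
    · refine ⟨E (2 * k + 2), h4, ?_, ?_⟩
      · by_contra h6
        exact hc.2.2.2 ⟨p, hp, Or.inr ⟨k, hk, by linarith, by linarith, h5⟩⟩
      · rw [S.prof.black k hk z _ h3.le h4.le le_rfl]
        have := S.hδ1
        nlinarith
  obtain ⟨y, hy1, hy2, hy3⟩ := step
  have : y ≤ z := hz4 ⟨⟨by linarith, hy2⟩, by
    show (1 - 2 * δ) * (y - x) ≤ G y - G x
    have : (1 - 2 * δ) * (z - x) ≤ G z - G x := hz3
    linarith⟩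
  linarith

/-- no black component extends over the whole range -/
theorem exc (S : Sys δ r E G vB vW P Q) {s} (hc : IsComp (UB r E P) s (E (2 * r))) (hs : s < E 0) :
    False := by
  have h0 : E 0 < E (2 * r) := S.prof.lt (by have := S.hr; omega) le_rfl
  obtain ⟨p, hp, hI⟩ := cover_B S (i := 0) (by omega) (hc.2.1 _ hs h0)
  obtain ⟨⟨i, hi, hpi⟩, hB, hW, hρ, hb, -⟩ := S.hP p hp
  have a1 := comp_contains S hc hp hI hs h0
  have a2 := suffix S hc (x := p.1 + p.2) (by linarith [hI.2]) a1.2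
  have a3 := S.prof.left (p.1 - p.2) (E 0) hI.1.le le_rfl
  have := S.mB i hi (by rw [← hpi]; linarith [hI.1]) (by rw [← hpi]; linarith)
  linarith

theorem excW (S : Sys δ r E G vB vW P Q) {v} (hc : IsComp (UW r E Q) (E 0) v) (hv : E (2 * r) < v) :
    False := by
  have := hc.neg (fun x => mem_UB_star)
  refine exc S.starS (s := -v) ?_ ?_
  · simpa [Estar] using this
  · simpa [Estar] using hv

theorem LA (S : Sys δ r E G vB vW P Q) {s t u v} (hB : IsComp (UB r E P) s t)
    (hW : IsComp (UW r E Q) u v) (h1 : s < u) (h2 : u < t) (h3 : t < v) : False := by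
  obtain ⟨i', hi', ht⟩ := endB_right S hB
  obtain ⟨j, hj, hu⟩ := endW_left S hW
  obtain ⟨i, rfl⟩ : ∃ i, i = i' + 1 := ⟨_, rfl⟩
  rw [show 2 * i' + 2 = 2 * (i' + 1) by ring] at ht
  set i := i' + 1
  have hij : j < i := by
    rw [hu, ht] at h2
    have := (S.prof.lt_iff (by omega) (by omega)).mp h2
    omega
  obtain ⟨p, hp, hpI⟩ := cover_B S (i := 2 * j) (by omega) (by rw [← hu]; exact hB.2.1 _ h1 h2)
  rw [← hu] at hpI
  obtain ⟨q, hq, hqI⟩ := cover_W S (i := 2 * i) (by omega) (by rw [← ht]; exact hW.2.1 _ h2 h3)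
  rw [← ht] at hqI
  rcases Nat.lt_or_ge (i - j) r with hn | hn
  · have hprof : Prof (i - j) (fun m => E (2 * j + m)) (cut G u t) := by
      constructor
      · intro m hm; exact S.prof.lt (by omega) (by omega)
      · intro x y hxy hy
        simp only [Nat.add_zero, ← hu] at hy
        rw [cut_left hy, cut_left (hxy.trans hy)]; ring
      · intro x y hx hxy
        rw [show 2 * j + 2 * (i - j) = 2 * i by omega, ← ht] at hx
        rw [cut_right h2.le hx, cut_right h2.le (hx.trans hxy)]; ring
      · intro k hk x y hx hxy hy
        have a1 := S.prof.le (i := 2 * j) (j := 2 * j + (2 * k + 1)) (by omega) (by omega)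
        have a2 := S.prof.le (j := 2 * i) (i := 2 * j + (2 * k + 2)) (by omega) (by omega)
        rw [← hu] at a1; rw [← ht] at a2
        rw [cut_mid (x := x) (by linarith) (by linarith),
          cut_mid (x := y) (by linarith) (by linarith)]
        exact S.prof.black (j + k) (by omega) x y
          (by rw [show 2 * (j + k) + 1 = 2 * j + (2 * k + 1) by ring]; exact hx) hxy
          (by rw [show 2 * (j + k) + 2 = 2 * j + (2 * k + 2) by ring]; exact hy)
      · intro k hk x y hx hxy hy
        have a1 := S.prof.le (i := 2 * j) (j := 2 * j + (2 * k)) (by omega) (by omega)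
        have a2 := S.prof.le (j := 2 * i) (i := 2 * j + (2 * k + 1)) (by omega) (by omega)
        rw [← hu] at a1; rw [← ht] at a2
        rw [cut_mid (x := x) (by linarith) (by linarith),
          cut_mid (x := y) (by linarith) (by linarith)]
        exact S.prof.white (j + k) (by omega) x y
          (by rw [show 2 * (j + k) = 2 * j + (2 * k) by ring]; exact hx) hxy
          (by rw [show 2 * (j + k) + 1 = 2 * j + (2 * k + 1) by ring]; exact hy)
    obtain ⟨m, hm, hbad⟩ := S.H _ hn _ _ hprof
    apply hbad
    have hux : u ≤ E (2 * j + m) := by rw [hu]; exact S.prof.le (by omega) (by omega)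
    have hxt : E (2 * j + m) ≤ t := by rw [ht]; exact S.prof.le (by omega) (by omega)
    have hml := S.prof.ml
    rcases le_or_gt (E (2 * j + m)) vB with c1 | c1
    · have hp' := S.hP p hp
      exact core_c S.hδ1 hml hux (by linarith) hp'.2.2.2 hpI.1
        (comp_contains S hB hp hpI h1 h2).2
    rcases le_or_gt vW (E (2 * j + m)) with c2 | c2
    · have hq' := S.hQ q hq
      refine core_d S.hδ1 hml hxt (by linarith) hq'.2.2.2 hqI.2 ?_
      by_contra hc
      exact hW.2.2.1 ⟨q, hq, Or.inl ⟨not_le.mp hc, by linarith [hqI.2]⟩⟩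
    rcases S.cov (2 * j + m) (by omega) c1 c2 with ⟨ρ, hρ, hok⟩ | ⟨ρ, hρ, hok⟩
    · refine core_a hml hux hok ?_
      by_contra hc
      exact hB.2.2.2 ⟨_, hρ, Or.inl ⟨by dsimp only; linarith [hok.1], not_le.mp hc⟩⟩
    · refine core_b hml hxt hok ?_
      by_contra hc
      exact hW.2.2.1 ⟨_, hρ, Or.inl ⟨not_le.mp hc, by dsimp only; linarith [hok.1]⟩⟩
  · have hj0 : j = 0 := by omega
    have hir : i = r := by omega
    rw [hir] at ht
    subst hj0
    rw [ht] at hB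
    exact exc S hB (by rw [hu] at h1; exact h1)

theorem BOK_refl {x ρ} : BOK δ (refl' G) (-x) ρ ↔ BOK δ G x ρ := by
  unfold BOK; simp only [refl_diff]
theorem WOK_refl {x ρ} : WOK δ (refl' G) (-x) ρ ↔ WOK δ G x ρ := by
  unfold WOK; simp only [refl_diff]
theorem BM_refl {x ρ} : BM δ (refl' G) (-x) ρ ↔ BM δ G x ρ := by
  unfold BM; simp only [refl_diff]
theorem WM_refl {x ρ} : WM δ (refl' G) (-x) ρ ↔ WM δ G x ρ := by
  unfold WM; simp only [refl_diff]

theorem LB (S : Sys δ r E G vB vW P Q) {s t u v} (hB : IsComp (UB r E P) s t)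
    (hW : IsComp (UW r E Q) u v) (h1 : u < s) (h2 : s < v) (h3 : v < t) : False := by
  obtain ⟨i', hi', ht⟩ := endB_right S hB
  obtain ⟨j', hj', hu⟩ := endW_left S hW
  obtain ⟨k, hk, hs⟩ : ∃ k < r, s = E (2 * k + 1) := by
    rcases endB_left S hB with h | h
    · have := S.prof.le (i := 0) (j := 2 * j') (by omega) (by omega)
      linarith
    · exact h
  obtain ⟨l, hl, hv⟩ : ∃ l < r, v = E (2 * l + 1) := by
    rcases endW_right S hW with h | h
    · have := S.prof.le (i := 2 * i' + 2) (j := 2 * r) (by omega) (by omega)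
      linarith
    · exact h
  have hkl : k < l := by
    rw [hs, hv] at h2
    have := (S.prof.lt_iff (by omega) (by omega)).mp h2
    omega
  obtain ⟨p, hp, hpI⟩ := cover_B S (i := 2 * l + 1) (by omega)
    (by rw [← hv]; exact hB.2.1 _ h2 h3)
  rw [← hv] at hpI
  obtain ⟨q, hq, hqI⟩ := cover_W S (i := 2 * k + 1) (by omega)
    (by rw [← hs]; exact hW.2.1 _ h1 h2)
  rw [← hs] at hqI
  have hprof : Prof (l - k) (fun m => -E (2 * l + 1 - m)) (cut (refl' G) (-v) (-s)) := by
    constructor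
    · intro m hm; exact neg_lt_neg (S.prof.lt (by omega) (by omega))
    · intro x y hxy hy
      simp only [Nat.sub_zero, ← hv] at hy
      rw [cut_left hy, cut_left (hxy.trans hy)]; ring
    · intro x y hx hxy
      rw [show 2 * l + 1 - 2 * (l - k) = 2 * k + 1 by omega, ← hs] at hx
      rw [cut_right (by linarith) hx, cut_right (by linarith) (hx.trans hxy)]; ring
    · intro m hm x y hx hxy hy
      have a1 := S.prof.le (j := 2 * l + 1) (i := 2 * l + 1 - (2 * m + 1)) (by omega) (by omega)
      have a2 := S.prof.le (i := 2 * k + 1) (j := 2 * l + 1 - (2 * m + 2)) (by omega) (by omega)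
      rw [← hv] at a1; rw [← hs] at a2
      rw [cut_mid (x := x) (by linarith) (by linarith),
        cut_mid (x := y) (by linarith) (by linarith)]
      rw [show 2 * l + 1 - (2 * m + 1) = 2 * (l - m - 1) + 2 by omega] at hx
      rw [show 2 * l + 1 - (2 * m + 2) = 2 * (l - m - 1) + 1 by omega] at hy
      have := S.prof.black (l - m - 1) (by omega) (-y) (-x) (by linarith) (by linarith)
        (by linarith)
      unfold refl'; linarith
    · intro m hm x y hx hxy hy
      have a1 := S.prof.le (j := 2 * l + 1) (i := 2 * l + 1 - (2 * m)) (by omega) (by omega)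
      have a2 := S.prof.le (i := 2 * k + 1) (j := 2 * l + 1 - (2 * m + 1)) (by omega) (by omega)
      rw [← hv] at a1; rw [← hs] at a2
      rw [cut_mid (x := x) (by linarith) (by linarith),
        cut_mid (x := y) (by linarith) (by linarith)]
      rw [show 2 * l + 1 - (2 * m) = 2 * (l - m) + 1 by omega] at hx
      rw [show 2 * l + 1 - (2 * m + 1) = 2 * (l - m) by omega] at hy
      have := S.prof.white (l - m) (by omega) (-y) (-x) (by linarith) (by linarith)
        (by linarith)
      unfold refl'; linarith
  obtain ⟨m, hm, hbad⟩ := S.H _ (by omega) _ _ hprof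
  apply hbad
  have hsx : s ≤ E (2 * l + 1 - m) := by rw [hs]; exact S.prof.le (by omega) (by omega)
  have hxv : E (2 * l + 1 - m) ≤ v := by rw [hv]; exact S.prof.le (by omega) (by omega)
  have hml := ML_refl S.prof.ml
  rcases le_or_gt (E (2 * l + 1 - m)) vB with c1 | c1
  · have hq' := S.hQ q hq
    refine core_d (p := -q.1) (ρ := q.2) S.hδ1 hml (by linarith) (by linarith)
      (WM_refl.mpr hq'.2.2.2) (by linarith [hqI.1]) ?_
    by_contra hc
    exact hW.2.2.2 ⟨q, hq, Or.inl ⟨by linarith [hqI.1], by linarith [not_le.mp hc]⟩⟩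
  rcases le_or_gt vW (E (2 * l + 1 - m)) with c2 | c2
  · have hp' := S.hP p hp
    exact core_c (p := -p.1) (ρ := p.2) S.hδ1 hml (by linarith) (by linarith)
      (BM_refl.mpr hp'.2.2.2) (by linarith [hpI.2])
      (by linarith [(comp_contains S hB hp hpI h2 h3).1])
  rcases S.cov (2 * l + 1 - m) (by omega) c1 c2 with ⟨ρ, hρ, hok⟩ | ⟨ρ, hρ, hok⟩
  · refine core_a hml (by linarith) (BOK_refl.mpr hok) ?_
    by_contra hc
    exact hB.2.2.1 ⟨_, hρ, Or.inl ⟨by dsimp only; linarith, by dsimp only; linarith [hok.1]⟩⟩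
  · refine core_b hml (by linarith) (WOK_refl.mpr hok) ?_
    by_contra hc
    exact hW.2.2.2 ⟨_, hρ, Or.inl ⟨by dsimp only; linarith [hok.1], by dsimp only; linarith⟩⟩

end

/-! ### The merging lemma and the nesting theorem -/

section
variable {δ : ℝ} {r : ℕ} {E : ℕ → ℝ} {G : ℝ → ℝ} {vB vW : ℝ} {P Q : Set (ℝ × ℝ)}

/-- a profile with a new initial edge at `c` and unchanged right of `w` -/
noncomputable def mrg (G : ℝ → ℝ) (c w x : ℝ) : ℝ := if x ≤ w then G w + min (x - c) 0 else G x

theorem mrg_right {c w x : ℝ} (hc : c ≤ w) (hx : w ≤ x) : mrg G c w x = G x := by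
  unfold mrg
  split_ifs with h
  · obtain rfl : x = w := le_antisymm h hx
    rw [min_eq_right (by linarith)]; ring
  · rfl

theorem mrg_left {c w x : ℝ} (hc : c ≤ w) (hx : x ≤ c) : mrg G c w x = G w + (x - c) := by
  unfold mrg
  rw [if_pos (by linarith), min_eq_left (by linarith)]

theorem mrg_mid {c w x : ℝ} (h : c ≤ x) (hx : x ≤ w) : mrg G c w x = G w := by
  unfold mrg
  rw [if_pos hx, min_eq_right (by linarith)]; ring

theorem LM (S : Sys δ r E G vB vW P Q) {k : ℕ} {w : ℝ} (hk1 : 1 ≤ k) (hk : k < r)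
    (hw1 : E (2 * k) ≤ w) (hw2 : w ≤ E (2 * k + 1)) (hwB : w ≤ vB)
    (hwP : ∀ p ∈ P, ¬ InI p w) (hwQ : ∀ q ∈ Q, ¬ InI q w) : False := by
  have hδ1 := S.hδ1
  have hδ2 := S.hδ2
  have hml := S.prof.ml
  have hM0 : 0 < G w - G (E 0) := by
    have a1 := S.prof.black 0 S.hr (E 1) (E 2) le_rfl (S.prof.mono 1 (by omega)).le le_rfl
    have a2 := S.prof.mono 1 (by omega)
    have a3 := hml (E 0) (E 1) (S.prof.le (by omega) (by omega))
    have a4 := hml (E 2) w ((S.prof.le (by omega) (by omega)).trans hw1)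
    norm_num at a2
    linarith
  have hM1 : G w - G (E 0) < E (2 * k) - E 0 := by
    have a1 := S.prof.white 0 S.hr (E 0) (E 1) le_rfl (S.prof.mono 0 (by omega)).le le_rfl
    have a2 := S.prof.mono 0 (by omega)
    have a3 := hml (E 1) (E (2 * k)) (S.prof.le (by omega) (by omega))
    have a4 := S.prof.white k hk (E (2 * k)) w le_rfl hw1 hw2
    norm_num at a2
    linarith
  obtain ⟨M, hM⟩ : ∃ M, M = G w - G (E 0) := ⟨_, rfl⟩
  rw [← hM] at hM0 hM1
  have hM2 : M < M / (2 * δ) := by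
    rw [lt_div_iff₀ (by linarith)]; nlinarith
  obtain ⟨c, hc1, hc2⟩ := exists_between (lt_min hM1 hM2)
  have hc3 := hc2.trans_le (min_le_left _ _)
  have hc4 := hc2.trans_le (min_le_right _ _)
  rw [lt_div_iff₀ (by linarith)] at hc4
  have hcw : E 0 + c ≤ w := by linarith
  have h0N : E 0 < E (2 * r) := S.prof.lt (by omega) le_rfl
  have hmB := S.midB
  have hmW := S.midW
  have hprof : Prof (r - k) (fun m => if m = 0 then E 0 + c else E (2 * k + m))
      (mrg G (E 0 + c) w) := by
    have hpos : ∀ m ≤ 2 * r - 2 * k, m ≠ 0 → w ≤ E (2 * k + m) := fun m hm h0 =>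
      hw2.trans (S.prof.le (by omega) (by omega))
    constructor
    · intro m hm
      rcases Nat.eq_zero_or_pos m with h | h
      · subst h
        have := S.prof.lt (i := 2 * k) (j := 2 * k + 1) (by omega) (by omega)
        simp; linarith
      · rw [if_neg (by omega), if_neg (by omega)]
        exact S.prof.lt (by omega) (by omega)
    · intro x y hxy hy
      rw [if_pos rfl] at hy
      rw [mrg_left hcw hy, mrg_left hcw (hxy.trans hy)]; ring
    · intro x y hx hxy
      rw [if_neg (by omega)] at hx
      have := hpos (2 * (r - k)) (by omega) (by omega)
      rw [mrg_right hcw (by linarith), mrg_right hcw (by linarith)]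
      rw [show 2 * k + 2 * (r - k) = 2 * r by omega] at hx
      exact S.prof.right x y hx hxy
    · intro m hm x y hx hxy hy
      rw [if_neg (by omega)] at hx hy
      have := hpos (2 * m + 1) (by omega) (by omega)
      rw [mrg_right hcw (by linarith), mrg_right hcw (by linarith)]
      exact S.prof.black (k + m) (by omega) x y
          (by rw [show 2 * (k + m) + 1 = 2 * k + (2 * m + 1) by ring]; exact hx) hxy
          (by rw [show 2 * (k + m) + 2 = 2 * k + (2 * m + 2) by ring]; exact hy)
    · intro m hm x y hx hxy hy
      rw [if_neg (by omega : 2 * m + 1 ≠ 0)] at hy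
      rcases Nat.eq_zero_or_pos m with h | h
      · subst h
        rw [if_pos rfl] at hx
        have aux : ∀ z, E 0 + c ≤ z → z ≤ E (2 * k + 1) → mrg G (E 0 + c) w z = G w := by
          intro z hz1 hz2
          rcases le_total z w with h | h
          · exact mrg_mid hz1 h
          · rw [mrg_right hcw h]
            have := S.prof.white k hk w z hw1 h hz2
            linarith
        rw [aux x hx (by linarith), aux y (by linarith) hy]; ring
      · rw [if_neg (by omega)] at hx
        have := hpos (2 * m) (by omega) (by omega)
        rw [mrg_right hcw (by linarith), mrg_right hcw (by linarith)]
        exact S.prof.white (k + m) (by omega) x y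
          (by rw [show 2 * (k + m) = 2 * k + (2 * m) by ring]; exact hx) hxy
          (by rw [show 2 * (k + m) + 1 = 2 * k + (2 * m + 1) by ring]; exact hy)
  have hN : w ≤ E (2 * r) := hw2.trans (S.prof.le (by omega) (by omega))
  have hblack : ∀ x, E 0 + c ≤ x → x ≤ vB → SG δ (mrg G (E 0 + c) w) x := by
    intro x hx hxB
    refine ⟨E (2 * r) - x, by linarith, Or.inr ?_⟩
    rw [show x + (E (2 * r) - x) = E (2 * r) by ring, mrg_right hcw hN,
      mrg_left hcw (by linarith)]
    have := S.gB
    nlinarith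
  obtain ⟨m, hm, hbad⟩ := S.H _ (by omega) _ _ hprof
  apply hbad
  rcases Nat.eq_zero_or_pos m with h | h
  · subst h
    rw [if_pos rfl]
    exact hblack _ le_rfl (by linarith)
  rw [if_neg (by omega)]
  have hx : w ≤ E (2 * k + m) := hw2.trans (S.prof.le (by omega) (by omega))
  rcases le_or_gt (E (2 * k + m)) vB with c1 | c1
  · exact hblack _ (by linarith) c1
  rcases le_or_gt vW (E (2 * k + m)) with c2 | c2
  · set x := E (2 * k + m)
    refine ⟨x - (E 0 + c), by linarith, Or.inl ?_⟩
    rw [mrg_right hcw (by linarith), mrg_left hcw (by linarith)]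
    have h1 : G (x + (x - (E 0 + c))) ≤ G (E (2 * r)) := by
      rcases le_total (x + (x - (E 0 + c))) (E (2 * r)) with h | h
      · exact (hml _ _ h).1
      · have := S.prof.right _ _ le_rfl h; linarith
    have := S.gW
    nlinarith
  rcases S.cov (2 * k + m) (by omega) c1 c2 with ⟨ρ, hρ, hok⟩ | ⟨ρ, hρ, hok⟩
  · have hwx : w ≤ E (2 * k + m) - ρ := by
      by_contra hcon
      exact hwP _ hρ ⟨not_le.mp hcon, by have := hok.1; dsimp only; linarith⟩
    obtain ⟨hρ0, h | ⟨h, z, hz1, hz2, hz3⟩⟩ := hok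
    · refine ⟨ρ, hρ0, Or.inr ?_⟩
      rwa [mrg_right hcw (by linarith), mrg_right hcw (by linarith)]
    · refine ⟨z, hz1, Or.inl ?_⟩
      rwa [mrg_right hcw (by linarith), mrg_right hcw (by linarith)]
  · have hwx : w ≤ E (2 * k + m) - ρ := by
      by_contra hcon
      exact hwQ _ hρ ⟨not_le.mp hcon, by have := hok.1; dsimp only; linarith⟩
    obtain ⟨hρ0, h | ⟨h, z, hz1, hz2, hz3⟩⟩ := hok
    · refine ⟨ρ, hρ0, Or.inl ?_⟩
      rwa [mrg_right hcw (by linarith), mrg_right hcw (by linarith)]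
    · refine ⟨z, hz1, Or.inr ?_⟩
      rwa [mrg_right hcw (by linarith), mrg_right hcw (by linarith)]

theorem LMstar (S : Sys δ r E G vB vW P Q) {l : ℕ} {w : ℝ} (hl : l + 1 < r)
    (hw1 : E (2 * l + 1) ≤ w) (hw2 : w ≤ E (2 * l + 2)) (hwW : vW ≤ w)
    (hwP : ∀ p ∈ P, ¬ InI p w) (hwQ : ∀ q ∈ Q, ¬ InI q w) : False := by
  refine LM S.starS (k := r - l - 1) (w := -w) (by omega) (by omega) ?_ ?_ (by linarith) ?_ ?_
  · unfold Estar
    rw [show 2 * r - 2 * (r - l - 1) = 2 * l + 2 by omega]; linarith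
  · unfold Estar
    rw [show 2 * r - (2 * (r - l - 1) + 1) = 2 * l + 1 by omega]; linarith
  · intro p hp hI
    exact hwQ _ hp ⟨by dsimp only; linarith [hI.2], by dsimp only; linarith [hI.1]⟩
  · intro p hp hI
    exact hwP _ hp ⟨by dsimp only; linarith [hI.2], by dsimp only; linarith [hI.1]⟩

theorem CW (S : Sys δ r E G vB vW P Q) {u v} (hW : IsComp (UW r E Q) u v) (hu : u ∉ UB r E P)
    (hv : v ∉ UB r E P) : u = E 0 ∧ v = E (2 * r - 1) := by
  obtain ⟨q, hq, hq1, hq2⟩ := comp_centerW S hW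
  have hq' := S.hQ q hq
  have free : ∀ i ≤ 2 * r, E i ∉ UB r E P → E i ∉ UW r E Q → E i ≤ vB ∨ vW ≤ E i := by
    intro i hi h1 h2
    by_contra hc
    push Not at hc
    rcases S.cov i hi hc.1 hc.2 with ⟨ρ, hρ, hok⟩ | ⟨ρ, hρ, hok⟩
    · exact h1 ⟨_, hρ, Or.inl ⟨by dsimp only; linarith [hok.1], by dsimp only; linarith [hok.1]⟩⟩
    · exact h2 ⟨_, hρ, Or.inl ⟨by dsimp only; linarith [hok.1], by dsimp only; linarith [hok.1]⟩⟩
  have noP : ∀ x, x ∉ UB r E P → ∀ p ∈ P, ¬ InI p x := fun x hx p hp h => hx ⟨p, hp, Or.inl h⟩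
  have noQ : ∀ x, x ∉ UW r E Q → ∀ p ∈ Q, ¬ InI p x := fun x hx p hp h => hx ⟨p, hp, Or.inl h⟩
  obtain ⟨j, hj, huj⟩ := endW_left S hW
  have hu0 : u = E 0 := by
    rcases Nat.eq_zero_or_pos j with h | h
    · rw [huj, h]
    · exfalso
      have h1 : u ≤ vB := by
        rcases free (2 * j) (by omega) (huj ▸ hu) (huj ▸ hW.2.2.1) with h1 | h1
        · rw [huj]; exact h1
        · rw [← huj] at h1; linarith
      exact LM S h hj huj.ge (by rw [huj]; exact (S.prof.le (by omega) (by omega))) h1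
        (noP _ hu) (noQ _ hW.2.2.1)
  refine ⟨hu0, ?_⟩
  rcases endW_right S hW with h | ⟨l, hl, hvl⟩
  · rw [hu0] at hW
    exact (excW S hW h).elim
  · by_cases hlr : l + 1 < r
    · exfalso
      have h1 : vW ≤ v := by
        rcases free (2 * l + 1) (by omega) (hvl ▸ hv) (hvl ▸ hW.2.2.2) with h1 | h1
        · rw [← hvl] at h1; linarith
        · rw [hvl]; exact h1
      exact LMstar S hlr hvl.ge (by rw [hvl]; exact (S.prof.le (by omega) (by omega))) h1
        (noP _ hv) (noQ _ hW.2.2.2)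
    · rw [hvl]; congr 1; omega

theorem exists_comp {U : Set ℝ} (hU : IsOpen U) {x lo hi : ℝ} (hx : x ∈ U) (h1 : lo ≤ x)
    (h2 : x ≤ hi) (hlo : lo ∉ U) (hhi : hi ∉ U) : ∃ s t, IsComp U s t ∧ s < x ∧ x < t := by
  obtain ⟨s, ⟨⟨hs1, hs2⟩, hs3⟩, hs4⟩ :=
    (isCompact_Icc.inter_right hU.isClosed_compl : IsCompact (Icc lo x ∩ Uᶜ)).exists_isGreatest
      ⟨lo, ⟨le_rfl, h1⟩, hlo⟩
  obtain ⟨t, ⟨⟨ht1, ht2⟩, ht3⟩, ht4⟩ :=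
    (isCompact_Icc.inter_right hU.isClosed_compl : IsCompact (Icc x hi ∩ Uᶜ)).exists_isLeast
      ⟨hi, ⟨h2, le_rfl⟩, hhi⟩
  have hsx : s < x := lt_of_le_of_ne hs2 (fun h => hs3 (h ▸ hx))
  have hxt : x < t := lt_of_le_of_ne ht1 (fun h => ht3 (h ▸ hx))
  refine ⟨s, t, ⟨hsx.trans hxt, ?_, hs3, ht3⟩, hsx, hxt⟩
  intro y hy1 hy2
  by_contra hy
  rcases le_total y x with h | h
  · have := hs4 ⟨⟨by linarith, h⟩, hy⟩; linarith
  · have := ht4 ⟨⟨h, by linarith⟩, hy⟩; linarith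

theorem isOpen_UB : IsOpen (UB r E P) := by
  have : UB r E P = ⋃ p ∈ P, (Ioo (p.1 - p.2) (p.1 + p.2) ∪
      ⋃ k ∈ {k | k < r ∧ ∃ y, InI p y ∧ E (2 * k + 1) < y ∧ y < E (2 * k + 2)},
        Ioo (E (2 * k + 1)) (E (2 * k + 2))) := by
    ext x
    simp only [UB, InI, mem_ofPred_eq, mem_iUnion, mem_union, mem_Ioo, exists_prop]
    constructor
    · rintro ⟨p, hp, h | ⟨k, hk, h1, h2, h3⟩⟩
      · exact ⟨p, hp, Or.inl h⟩
      · exact ⟨p, hp, Or.inr ⟨k, ⟨hk, h3⟩, h1, h2⟩⟩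
    · rintro ⟨p, hp, h | ⟨k, ⟨hk, h3⟩, h1, h2⟩⟩
      · exact ⟨p, hp, Or.inl h⟩
      · exact ⟨p, hp, Or.inr ⟨k, hk, h1, h2, h3⟩⟩
  rw [this]
  exact isOpen_biUnion fun p _ => isOpen_Ioo.union (isOpen_biUnion fun k _ => isOpen_Ioo)

theorem UB_comp (S : Sys δ r E G vB vW P Q) {x} (hx : x ∈ UB r E P) :
    ∃ s t, IsComp (UB r E P) s t ∧ s < x ∧ x < t := by
  have hlt : ∀ y ∈ UB r E P, E 0 - (E (2 * r) - E 0) < y ∧ y < E (2 * r) := by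
    rintro y ⟨p, hp, h | ⟨k, hk, h1, h2, -⟩⟩
    · have a := S.reach hp
      have b := (S.hP p hp).2.1
      have c := S.loB
      exact ⟨by linarith [h.1], by linarith [h.2]⟩
    · have a := S.prof.le (i := 0) (j := 2 * k + 1) (by omega) (by omega)
      have b := S.prof.le (i := 2 * k + 2) (j := 2 * r) (by omega) (by omega)
      constructor <;> linarith
  exact exists_comp isOpen_UB hx (hlt x hx).1.le (hlt x hx).2.le
    (fun h => lt_irrefl _ (hlt _ h).1) (fun h => lt_irrefl _ (hlt _ h).2)

theorem UW_comp (S : Sys δ r E G vB vW P Q) {x} (hx : x ∈ UW r E Q) :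
    ∃ s t, IsComp (UW r E Q) s t ∧ s < x ∧ x < t := by
  obtain ⟨s, t, h, h1, h2⟩ := UB_comp S.starS (mem_UB_star.mpr hx)
  refine ⟨-t, -s, h.neg (fun y => ?_), by linarith, by linarith⟩
  rw [← mem_UB_star, neg_neg]

theorem comp_eq {U : Set ℝ} {s t s' t' : ℝ} (h : IsComp U s t) (h' : IsComp U s' t')
    (h1 : s < t') (h2 : s' < t) : s = s' ∧ t = t' := by
  constructor
  · by_contra hne
    rcases lt_or_gt_of_ne hne with a | a
    · exact h'.2.2.1 (h.2.1 _ a h2)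
    · exact h.2.2.1 (h'.2.1 _ a h1)
  · by_contra hne
    rcases lt_or_gt_of_ne hne with a | a
    · exact h.2.2.2 (h'.2.1 _ h2 a)
    · exact h'.2.2.2 (h.2.1 _ h1 a)

theorem half (S : Sys δ r E G vB vW P Q) {s t u v} (hB : IsComp (UB r E P) s t)
    (hW : IsComp (UW r E Q) u v) (h1 : s < v) (h2 : u < t) :
    (s ≤ u ∧ v ≤ t) ∨ (u = E 0 ∧ v = E (2 * r - 1) ∧ u ≤ s ∧ t ≤ v) := by
  by_cases hn : s ≤ u ∧ v ≤ t
  · exact Or.inl hn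
  right
  have hsub : u ≤ s ∧ t ≤ v := by
    have a : ¬ (s < u ∧ t < v) := fun h => LA S hB hW h.1 h2 h.2
    have b : ¬ (u < s ∧ v < t) := fun h => LB S hB hW h.1 h1 h.2
    constructor
    · by_contra h
      push Not at h
      exact hn ⟨h.le, by by_contra h'; exact a ⟨h, not_le.mp h'⟩⟩
    · by_contra h
      push Not at h
      exact hn ⟨by by_contra h'; exact b ⟨not_le.mp h', h⟩, h.le⟩
  have hst := hB.1
  have huv := hW.1
  have hu : u ∉ UB r E P := by
    intro h
    obtain ⟨s2, t2, hc, h3, h4⟩ := UB_comp S h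
    have h5 : v ≤ t2 := by
      by_contra h'
      exact LA S hc hW h3 h4 (not_le.mp h')
    have := comp_eq hB hc (by linarith) (by linarith)
    linarith
  have hv : v ∉ UB r E P := by
    intro h
    obtain ⟨s2, t2, hc, h3, h4⟩ := UB_comp S h
    have h5 : s2 ≤ u := by
      by_contra h'
      exact LB S hc hW (not_le.mp h') h3 h4
    have := comp_eq hB hc (by linarith) (by linarith)
    linarith
  obtain ⟨a, b⟩ := CW S hW hu hv
  exact ⟨a, b, hsub.1, hsub.2⟩

theorem UB_mono {P' : Set (ℝ × ℝ)} (h : P ⊆ P') : UB r E P ⊆ UB r E P' :=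
  fun _ ⟨p, hp, h'⟩ => ⟨p, h hp, h'⟩
theorem UW_mono {P' : Set (ℝ × ℝ)} (h : P ⊆ P') : UW r E P ⊆ UW r E P' :=
  fun _ ⟨p, hp, h'⟩ => ⟨p, h hp, h'⟩

theorem comp_sub {U V : Set ℝ} (hUV : U ⊆ V) {s t s' t' x : ℝ} (h : IsComp U s t)
    (h' : IsComp V s' t') (h1 : s < x) (h2 : x < t) (h3 : s' < x) (h4 : x < t') :
    s' ≤ s ∧ t ≤ t' := by
  constructor
  · by_contra hc
    exact h'.2.2.1 (hUV (h.2.1 _ (not_le.mp hc) (by linarith)))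
  · by_contra hc
    exact h'.2.2.2 (hUV (h.2.1 _ (by linarith) (not_le.mp hc)))

theorem nested {P'' Q'' : Set (ℝ × ℝ)} (hPP : P ⊆ P'') (hQQ : Q ⊆ Q'')
    (S1 : Sys δ r E G vB vW P Q'') (S2 : Sys δ r E G vB vW P'' Q)
    (S3 : Sys δ r E G vB vW P'' Q'') {s t u v} (hB : IsComp (UB r E P) s t)
    (hW : IsComp (UW r E Q) u v) (h1 : s < v) (h2 : u < t) :
    (s ≤ u ∧ v ≤ t) ∨ (u ≤ s ∧ t ≤ v) := by
  have hst := hB.1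
  have huv := hW.1
  obtain ⟨x, hx1, hx2⟩ := exists_between huv
  obtain ⟨u', v', hW', hx3, hx4⟩ := UW_comp S3 (UW_mono hQQ (hW.2.1 x hx1 hx2))
  have hsubW := comp_sub (UW_mono hQQ) hW hW' hx1 hx2 hx3 hx4
  obtain ⟨y, hy1, hy2⟩ := exists_between hst
  obtain ⟨s', t', hB', hy3, hy4⟩ := UB_comp S3 (UB_mono hPP (hB.2.1 y hy1 hy2))
  have hsubB := comp_sub (UB_mono hPP) hB hB' hy1 hy2 hy3 hy4
  rcases half S1 hB hW' (by linarith) (by linarith) with h | ⟨a1, a2, a3, a4⟩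
  · left; constructor <;> linarith
  have key := half S2.starS (hW.neg (fun x => mem_UB_star)) (hB'.neg (fun x => mem_UW_star))
    (by linarith) (by linarith)
  rcases key with h | ⟨b1, b2, b3, b4⟩
  · right; constructor <;> linarith
  exfalso
  unfold Estar at b1 b2
  rw [Nat.sub_zero] at b1
  have hr := S1.hr
  rw [show 2 * r - (2 * r - 1) = 1 by omega] at b2
  obtain ⟨i, hi, hti⟩ := endB_right S1 hB
  have hr2 : 2 ≤ r := by
    by_contra hc
    rw [hti, a2] at a4
    have := S1.prof.lt (i := 2 * r - 1) (j := 2 * i + 2) (by omega) (by omega)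
    linarith
  have c1 := S1.prof.lt (i := 0) (j := 1) (by omega) (by omega)
  have c2 := S1.prof.lt (i := 1) (j := 2 * r - 1) (by omega) (by omega)
  have c3 := S1.prof.lt (i := 2 * r - 1) (j := 2 * r) (by omega) (by omega)
  exact LB S3 hB' hW' (by linarith) (by linarith) (by linarith)

end

/-! ### From configurations to profiles -/

/-- the increasing sequence of endpoints -/
noncomputable def CE (C : Config) (i : ℕ) : ℝ :=
  if h : 0 < i ∧ (i - 1) / 2 < C.r then
    (if i % 2 = 1 then C.a ⟨(i - 1) / 2, h.2⟩ else C.b ⟨(i - 1) / 2, h.2⟩) else 0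

theorem CE_zero (C : Config) : CE C 0 = 0 := by simp [CE]

theorem CE_odd (C : Config) {k : ℕ} (hk : k < C.r) : CE C (2 * k + 1) = C.a ⟨k, hk⟩ := by
  have h1 : (2 * k + 1 - 1) / 2 = k := by omega
  unfold CE
  rw [dif_pos ⟨by omega, by omega⟩, if_pos (by omega)]
  congr 2

theorem CE_even (C : Config) {k : ℕ} (hk : k < C.r) : CE C (2 * k + 2) = C.b ⟨k, hk⟩ := by
  have h1 : (2 * k + 2 - 1) / 2 = k := by omega
  unfold CE
  rw [dif_pos ⟨by omega, by omega⟩, if_neg (by omega)]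
  congr 2

theorem CE_mono (C : Config) : ∀ i < 2 * C.r, CE C i < CE C (i + 1) := by
  intro i hi
  rcases Nat.even_or_odd' i with ⟨k, rfl | rfl⟩
  · rw [CE_odd C (by omega)]
    rcases k with _ | k
    · rw [CE_zero]; exact C.ha _
    · rw [show 2 * (k + 1) = 2 * k + 2 by ring, CE_even C (by omega)]
      exact C.hba _ _ (by simp [Fin.lt_def])
  · rw [CE_odd C (by omega), show 2 * k + 1 + 1 = 2 * k + 2 by ring, CE_even C (by omega)]
    exact C.hab _

theorem mem_endpoints (C : Config) (c : ℝ) : c ∈ C.endpoints ↔ ∃ i ≤ 2 * C.r, c = CE C i := by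
  unfold Config.endpoints
  constructor
  · rintro (h | ⟨k, rfl⟩ | ⟨k, rfl⟩)
    · exact ⟨0, by omega, by rw [CE_zero]; exact h⟩
    · exact ⟨2 * k + 1, by omega, (CE_odd C k.2).symm⟩
    · exact ⟨2 * k + 2, by omega, (CE_even C k.2).symm⟩
  · rintro ⟨i, hi, rfl⟩
    rcases Nat.even_or_odd' i with ⟨k, rfl | rfl⟩
    · rcases k with _ | k
      · left; simp [CE]
      · right; right
        rw [show 2 * (k + 1) = 2 * k + 2 by ring, CE_even C (by omega)]; exact ⟨_, rfl⟩
    · right; left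
      rw [CE_odd C (by omega)]; exact ⟨_, rfl⟩

/-- cumulative mass -/
noncomputable def CG (C : Config) (x : ℝ) : ℝ := ∫ t in (0 : ℝ)..x, C.carrier.indicator 1 t

theorem carrier_meas (C : Config) : MeasurableSet C.carrier :=
  measurableSet_Iio.union (MeasurableSet.iUnion fun _ => measurableSet_Ioo)

theorem carrier_int (C : Config) (x y : ℝ) :
    IntervalIntegrable (C.carrier.indicator (1 : ℝ → ℝ)) volume x y := by
  have h : ∀ s : Set ℝ, volume s ≠ ⊤ → IntegrableOn (C.carrier.indicator (1 : ℝ → ℝ)) s := by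
    intro s hs
    exact Integrable.indicator (integrableOn_const hs) (carrier_meas C)
  exact ⟨h _ (by simp), h _ (by simp)⟩

theorem CG_diff (C : Config) {x y : ℝ} (h : x ≤ y) :
    CG C y - CG C x = (volume (C.carrier ∩ Ioo x y)).toReal := by
  unfold CG
  rw [intervalIntegral.integral_interval_sub_left (carrier_int C _ _) (carrier_int C _ _),
    intervalIntegral.integral_of_le h, integral_Ioc_eq_integral_Ioo,
    integral_indicator_one (carrier_meas C), measureReal_restrict_apply (carrier_meas C)]
  rfl

theorem CG_black (C : Config) {x y : ℝ} (h : x ≤ y) (hs : Ioo x y ⊆ C.carrier) :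
    CG C y - CG C x = y - x := by
  rw [CG_diff C h, inter_eq_self_of_subset_right hs, Real.volume_Ioo,
    ENNReal.toReal_ofReal (by linarith)]

theorem CG_white (C : Config) {x y : ℝ} (h : x ≤ y) (hs : ∀ z, x < z → z < y → z ∉ C.carrier) :
    CG C y - CG C x = 0 := by
  rw [CG_diff C h]
  have : C.carrier ∩ Ioo x y = ∅ := by
    ext z; simp only [mem_inter_iff, mem_Ioo, mem_empty_iff_false, iff_false]
    rintro ⟨h1, h2, h3⟩; exact hs z h2 h3 h1
  rw [this]; simp

theorem CE_pos (C : Config) {i j : ℕ} (hij : i ≤ j) (hj : j ≤ 2 * C.r) : CE C i ≤ CE C j := by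
  induction j with
  | zero => rw [show i = 0 by omega]
  | succ k ih =>
    rcases Nat.lt_or_ge i (k + 1) with h2 | h2
    · exact (ih (by omega) (by omega)).trans (CE_mono C k (by omega)).le
    · rw [show i = k + 1 by omega]

theorem CG_prof (C : Config) : Prof C.r (CE C) (CG C) := by
  have out : ∀ z ∈ C.carrier, z < 0 ∨ ∃ k < C.r, CE C (2 * k + 1) < z ∧ z < CE C (2 * k + 2) := by
    rintro z (hz | hz)
    · exact Or.inl hz
    · obtain ⟨k, hk⟩ := mem_iUnion.mp hz
      exact Or.inr ⟨k, k.2, by rw [CE_odd C k.2]; exact hk.1, by rw [CE_even C k.2]; exact hk.2⟩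
  constructor
  · exact CE_mono C
  · intro x y hxy hy
    rw [CE_zero] at hy
    exact CG_black C hxy (fun z hz => Or.inl (by have := hz.2; exact lt_of_lt_of_le this hy))
  · intro x y hx hxy
    refine CG_white C hxy (fun z h1 h2 h3 => ?_)
    rcases out z h3 with h | ⟨k, hk, h4, h5⟩
    · have := CE_pos C (i := 0) (j := 2 * C.r) (by omega) (by omega)
      rw [CE_zero] at this; linarith
    · have := CE_pos C (i := 2 * k + 2) (j := 2 * C.r) (by omega) (by omega)
      linarith
  · intro k hk x y h1 h2 h3
    refine CG_black C h2 (fun z hz => Or.inr (mem_iUnion.mpr ⟨⟨k, hk⟩, ?_⟩))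
    rw [← CE_odd C hk, ← CE_even C hk]
    exact ⟨by linarith [hz.1], by linarith [hz.2]⟩
  · intro k hk x y h1 h2 h3
    refine CG_white C h2 (fun z h4 h5 h6 => ?_)
    rcases out z h6 with h | ⟨l, hl, h7, h8⟩
    · have := CE_pos C (i := 0) (j := 2 * k) (by omega) (by omega)
      rw [CE_zero] at this; linarith
    · rcases Nat.lt_or_ge l k with h9 | h9
      · have := CE_pos C (i := 2 * l + 2) (j := 2 * k) (by omega) (by omega)
        linarith
      · have := CE_pos C (i := 2 * k + 1) (j := 2 * l + 1) (by omega) (by omega)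
        linarith

theorem rel_eq (C : Config) (p : ℝ) {w : ℝ} (hw : 0 ≤ w) :
    relMeasure C.carrier p w = (CG C (p + w) - CG C (p - w)) / (2 * w) := by
  unfold relMeasure
  rw [CG_diff C (by linarith)]

theorem rel_le {C : Config} {δ p w : ℝ} (hw : 0 < w) :
    relMeasure C.carrier p w ≤ δ ↔ CG C (p + w) - CG C (p - w) ≤ 2 * δ * w := by
  rw [rel_eq C p hw.le, div_le_iff₀ (by linarith)]
  constructor <;> intro h <;> linarith

theorem le_rel {C : Config} {δ p w : ℝ} (hw : 0 < w) :
    1 - δ ≤ relMeasure C.carrier p w ↔ 2 * (1 - δ) * w ≤ CG C (p + w) - CG C (p - w) := by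
  rw [rel_eq C p hw.le, le_div_iff₀ (by linarith)]
  constructor <;> intro h <;> linarith

theorem rel_notin {C : Config} {δ p w : ℝ} (hw : 0 < w) :
    relMeasure C.carrier p w ∉ Icc δ (1 - δ) ↔ (CG C (p + w) - CG C (p - w) < 2 * δ * w ∨
      2 * (1 - δ) * w < CG C (p + w) - CG C (p - w)) := by
  rw [mem_Icc, not_and_or, not_le, not_le, rel_eq C p hw.le, div_lt_iff₀ (by linarith),
    lt_div_iff₀ (by linarith)]
  constructor <;> rintro (h | h)
  · left; linarith
  · right; linarith
  · left; linarith
  · right; linarith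

theorem rel_notin' {C : Config} {δ p w : ℝ} (hw : 0 < w) :
    relMeasure C.carrier p w ∉ Ioo δ (1 - δ) ↔ (CG C (p + w) - CG C (p - w) ≤ 2 * δ * w ∨
      2 * (1 - δ) * w ≤ CG C (p + w) - CG C (p - w)) := by
  rw [mem_Ioo, not_and_or, not_lt, not_lt, rel_le hw, le_rel hw]

theorem ctr_iff {C : Config} {δ : ℝ} :
    IsCounterexample δ C ↔ ∀ i ≤ 2 * C.r, SG δ (CG C) (CE C i) := by
  unfold IsCounterexample
  constructor
  · intro h i hi
    obtain ⟨w, hw, h1⟩ := h _ ((mem_endpoints C _).mpr ⟨i, hi, rfl⟩)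
    exact ⟨w, hw, (rel_notin hw).mp h1⟩
  · intro h c hc
    obtain ⟨i, hi, rfl⟩ := (mem_endpoints C _).mp hc
    obtain ⟨w, hw, h1⟩ := h i hi
    exact ⟨w, hw, (rel_notin hw).mpr h1⟩

theorem H_of_min {δ : ℝ} (hδ2 : δ < 1 / 2) {r : ℕ}
    (hmin : ∀ C' : Config, C'.r < r → ¬ IsCounterexample δ C') :
    ∀ n < r, ∀ e G', Prof n e G' → ∃ i ≤ 2 * n, ¬ SG δ G' (e i) := by
  intro n hn e G' hp
  rcases Nat.eq_zero_or_pos n with h0 | h0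
  · subst h0
    refine ⟨0, le_rfl, ?_⟩
    rintro ⟨w, hw, h⟩
    have a1 := hp.left (e 0 - w) (e 0) (by linarith) le_rfl
    have a2 := hp.right (e 0) (e 0 + w) le_rfl (by linarith)
    have : G' (e 0 + w) - G' (e 0 - w) = w := by linarith
    rw [this] at h
    rcases h with h | h <;> nlinarith
  by_contra hcon
  push Not at hcon
  let C' : Config :=
    { r := n
      hr := h0
      a := fun i => e (2 * i + 1) - e 0
      b := fun i => e (2 * i + 2) - e 0
      ha := fun i => sub_pos.mpr (hp.lt (by omega) (by omega))
      hab := fun i => by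
        have := hp.lt (i := 2 * (i : ℕ) + 1) (j := 2 * i + 2) (by omega) (by omega)
        linarith
      hba := fun i j hij => by
        have h1 : (i : ℕ) < j := hij
        have := hp.lt (i := 2 * (i : ℕ) + 2) (j := 2 * j + 1) (by omega) (by omega)
        linarith }
  have hr' : C'.r = n := rfl
  have hE : ∀ i ≤ 2 * n, CE C' i = e i - e 0 := by
    intro i hi
    rcases Nat.even_or_odd' i with ⟨k, rfl | rfl⟩
    · rcases k with _ | k
      · simp [CE_zero]
      · rw [show 2 * (k + 1) = 2 * k + 2 by ring, CE_even C' (by omega)]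
    · rw [CE_odd C' (by omega)]
  have hp' : Prof n (CE C') (fun x => G' (x + e 0)) := by
    constructor
    · exact CE_mono C'
    · intro x y hxy hy
      rw [hE 0 (by omega)] at hy
      rw [hp.left _ _ (by linarith) (by linarith)]; ring
    · intro x y hx hxy
      rw [hE _ le_rfl] at hx
      exact hp.right _ _ (by linarith) (by linarith)
    · intro k hk x y h1 h2 h3
      rw [hE _ (by omega)] at h1 h3
      rw [hp.black k hk _ _ (by linarith) (by linarith) (by linarith)]; ring
    · intro k hk x y h1 h2 h3
      rw [hE _ (by omega)] at h1 h3
      exact hp.white k hk _ _ (by linarith) (by linarith) (by linarith)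
  apply hmin C' hn
  rw [ctr_iff]
  intro i hi
  obtain ⟨w, hw, h⟩ := hcon i hi
  refine ⟨w, hw, ?_⟩
  rw [(CG_prof C').unique hp' _ _ (by linarith : CE C' i - w ≤ CE C' i + w), hE i hi,
    show e i - e 0 + w + e 0 = e i + w by ring, show e i - e 0 - w + e 0 = e i - w by ring]
  exact h

/-! ### Extremal radii -/

theorem small_radius {n e G} (h : Prof n e G) {i : ℕ} (hi : i ≤ 2 * n) :
    ∃ ε > 0, ∀ w, 0 < w → w ≤ ε → G (e i + w) - G (e i - w) = w := by
  have left : ∀ i ≤ 2 * n, ∃ ε > 0, ∀ w, 0 < w → w ≤ ε →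
      G (e i) - G (e i - w) = if i % 2 = 0 then w else 0 := by
    intro i hi
    rcases Nat.even_or_odd' i with ⟨k, rfl | rfl⟩
    · simp only [show (2 * k) % 2 = 0 by omega, if_true]
      rcases k with _ | k
      · refine ⟨1, by norm_num, fun w h1 h2 => ?_⟩
        rw [h.left _ _ (by linarith) le_rfl]; ring
      · have := h.lt (i := 2 * k + 1) (j := 2 * k + 2) (by omega) (by omega)
        refine ⟨e (2 * k + 2) - e (2 * k + 1), by linarith, fun w h1 h2 => ?_⟩
        rw [show 2 * (k + 1) = 2 * k + 2 by ring]
        rw [h.black k (by omega) _ _ (by linarith) (by linarith) le_rfl]; ring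
    · simp only [show ¬ ((2 * k + 1) % 2 = 0) by omega, if_false]
      have := h.lt (i := 2 * k) (j := 2 * k + 1) (by omega) (by omega)
      refine ⟨e (2 * k + 1) - e (2 * k), by linarith, fun w h1 h2 => ?_⟩
      exact h.white k (by omega) _ _ (by linarith) (by linarith) le_rfl
  have right : ∀ i ≤ 2 * n, ∃ ε > 0, ∀ w, 0 < w → w ≤ ε →
      G (e i + w) - G (e i) = if i % 2 = 0 then 0 else w := by
    intro i hi
    rcases Nat.even_or_odd' i with ⟨k, rfl | rfl⟩
    · simp only [show (2 * k) % 2 = 0 by omega, if_true]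
      rcases Nat.lt_or_ge k n with hk | hk
      · have := h.lt (i := 2 * k) (j := 2 * k + 1) (by omega) (by omega)
        refine ⟨e (2 * k + 1) - e (2 * k), by linarith, fun w h1 h2 => ?_⟩
        exact h.white k (by omega) _ _ le_rfl (by linarith) (by linarith)
      · obtain rfl : k = n := by omega
        exact ⟨1, by norm_num, fun w h1 h2 => h.right _ _ le_rfl (by linarith)⟩
    · simp only [show ¬ ((2 * k + 1) % 2 = 0) by omega, if_false]
      have := h.lt (i := 2 * k + 1) (j := 2 * k + 2) (by omega) (by omega)
      refine ⟨e (2 * k + 2) - e (2 * k + 1), by linarith, fun w h1 h2 => ?_⟩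
      rw [h.black k (by omega) _ _ le_rfl (by linarith) (by linarith)]; ring
  obtain ⟨ε1, h1, h2⟩ := left i hi
  obtain ⟨ε2, h3, h4⟩ := right i hi
  refine ⟨min ε1 ε2, lt_min h1 h3, fun w hw hwε => ?_⟩
  have a := h2 w hw (hwε.trans (min_le_left _ _))
  have b := h4 w hw (hwε.trans (min_le_right _ _))
  split_ifs at a b <;> linarith

theorem exBM {δ n e G} (hδ2 : δ < 1 / 2) (h : Prof n e G) {i : ℕ} (hi : i ≤ 2 * n)
    {ν : ℝ} (hν : 0 < ν) (hb : 2 * (1 - δ) * ν < G (e i + ν) - G (e i - ν)) :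
    ∃ ρ, BM δ G (e i) ρ ∧ 2 * (1 - δ) * ρ < G (e i + ρ) - G (e i - ρ) := by
  obtain ⟨ε, hε, hsmall⟩ := small_radius h hi
  have hml := h.ml
  set x := e i
  obtain ⟨K, hK⟩ : ∃ K, K = e (2 * n) - e 0 := ⟨_, rfl⟩
  have hK0 : 0 ≤ K := by
    have := h.le (i := 0) (j := 2 * n) (by omega) le_rfl; linarith
  have hx0 : e 0 ≤ x := h.le (by omega) hi
  have hxN : x ≤ e (2 * n) := h.le hi le_rfl
  have hlarge : ∀ w > 0, G (x + w) - G (x - w) ≤ w + K := by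
    intro w hw
    have a1 := hml (x - w) x (by linarith)
    have a2 : G (x + w) ≤ G (e (2 * n)) := by
      rcases le_total (x + w) (e (2 * n)) with h' | h'
      · exact (hml _ _ h').1
      · have := h.right _ _ le_rfl h'; linarith
    have a3 := hml x (e (2 * n)) hxN
    linarith
  obtain ⟨L, hL⟩ : ∃ L, L = K / (1 - 2 * δ) := ⟨_, rfl⟩
  have hL' : L * (1 - 2 * δ) = K := by rw [hL]; field_simp [show 1 - 2 * δ ≠ 0 by linarith]
  have hcont : Continuous G := hml.cont
  have hlo : 0 < min ε ν := lt_min hε hν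
  obtain ⟨ρ, ⟨hρ1, hρ2⟩, hmax⟩ := (isCompact_Icc (a := min ε ν) (b := max L ν)).exists_isMaxOn
    ⟨ν, min_le_right _ _, le_max_right _ _⟩
    (f := fun w => (G (x + w) - G (x - w)) / w)
    (ContinuousOn.div (by fun_prop) (by fun_prop) (fun w hw => by
      have := hw.1; linarith))
  have hρ : 0 < ρ := by linarith
  have hmν := hmax (show ν ∈ Icc (min ε ν) (max L ν) from ⟨min_le_right _ _, le_max_right _ _⟩)
  change (G (x + ν) - G (x - ν)) / ν ≤ (G (x + ρ) - G (x - ρ)) / ρ at hmν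
  have hdν : 2 * (1 - δ) < (G (x + ν) - G (x - ν)) / ν := by
    rw [lt_div_iff₀ hν]; exact hb
  have hdρ : 2 * (1 - δ) * ρ < G (x + ρ) - G (x - ρ) := by
    rw [← lt_div_iff₀ hρ]; linarith
  refine ⟨ρ, ⟨hρ, hdρ.le, fun w hw => ?_⟩, hdρ⟩
  rw [← div_le_div_iff₀ hw hρ]
  rcases lt_or_ge w (min ε ν) with h1 | h1
  · rw [hsmall w hw (h1.le.trans (min_le_left _ _)), div_self hw.ne']; linarith
  rcases le_or_gt w (max L ν) with h2 | h2
  · exact hmax ⟨h1, h2⟩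
  · have h3 : L < w := (le_max_left _ _).trans_lt h2
    have : (G (x + w) - G (x - w)) / w ≤ 2 * (1 - δ) := by
      rw [div_le_iff₀ hw]
      have := hlarge w hw
      nlinarith
    linarith

theorem exWM {δ n e G} (hδ2 : δ < 1 / 2) (h : Prof n e G) {i : ℕ} (hi : i ≤ 2 * n)
    {ν : ℝ} (hν : 0 < ν) (hb : G (e i + ν) - G (e i - ν) < 2 * δ * ν) :
    ∃ ρ, WM δ G (e i) ρ ∧ G (e i + ρ) - G (e i - ρ) < 2 * δ * ρ := by
  have he : Estar n e (2 * n - i) = -e i := by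
    unfold Estar; rw [show 2 * n - (2 * n - i) = i by omega]
  obtain ⟨ρ, h1, h2⟩ := exBM hδ2 h.starP (i := 2 * n - i) (by omega) hν
    (by rw [he, star_diff]; linarith)
  rw [he] at h1 h2
  rw [star_diff] at h2
  exact ⟨ρ, BM_star.mp h1, by linarith⟩

/-! ### The radius `omegaMax` -/

/-- a radius of extreme density -/
def Good (C : Config) (δ p w : ℝ) : Prop :=
  CG C (p + w) - CG C (p - w) ≤ 2 * δ * w ∨ 2 * (1 - δ) * w ≤ CG C (p + w) - CG C (p - w)

theorem mass_large {C : Config} (h1 : CE C (2 * C.r) = 1) {p w : ℝ} (hw1 : p ≤ w)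
    (hw2 : 1 ≤ p + w) : CG C (p + w) - CG C (p - w) = CG C 1 - CG C 0 + w - p := by
  have hp := CG_prof C
  have a := hp.left (p - w) 0 (by linarith) (by rw [CE_zero])
  have b := hp.right 1 (p + w) (by rw [h1]) hw2
  linarith

theorem om_facts {C : Config} {δ p : ℝ} (hδ1 : 0 < δ) (hδ2 : δ < 1 / 2)
    (h1 : CE C (2 * C.r) = 1) (hctr : IsCounterexample δ C) (hp : p ∈ C.endpoints) :
    0 < omegaMax C δ p ∧ Good C δ p (omegaMax C δ p) ∧
      ∀ w > 0, Good C δ p w → w ≤ omegaMax C δ p := by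
  obtain ⟨w0, hw0, hg0⟩ := hctr p hp
  have hg0' : Good C δ p w0 := by
    rcases (rel_notin hw0).mp hg0 with h | h
    · exact Or.inl h.le
    · exact Or.inr h.le
  obtain ⟨i, hi, hpi⟩ := (mem_endpoints C p).mp hp
  have hprof := CG_prof C
  have hp0 : 0 ≤ p := by rw [hpi, ← CE_zero C]; exact hprof.le (by omega) hi
  have hp1 : p ≤ 1 := by rw [hpi, ← h1]; exact hprof.le hi le_rfl
  have hm := hprof.ml 0 1 (by norm_num)
  obtain ⟨K, hK⟩ : ∃ K, K = 1 / (1 - 2 * δ) := ⟨_, rfl⟩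
  have hK' : K * (1 - 2 * δ) = 1 := by rw [hK]; field_simp [show 1 - 2 * δ ≠ 0 by linarith]
  have hK1 : 1 ≤ K := by
    rw [hK, le_div_iff₀ (by linarith)]; linarith
  have bound : ∀ w > 0, Good C δ p w → w ≤ K := by
    intro w hw hg
    by_contra hcon
    push Not at hcon
    have hD := mass_large h1 (p := p) (w := w) (by linarith) (by linarith)
    rcases hg with h | h <;> rw [hD] at h <;> nlinarith
  have hcont : Continuous (CG C) := hprof.ml.cont
  have hcl : IsClosed {w | Good C δ p w} := by
    have e1 : IsClosed {w | CG C (p + w) - CG C (p - w) ≤ 2 * δ * w} :=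
      isClosed_le (by fun_prop) (by fun_prop)
    have e2 : IsClosed {w | 2 * (1 - δ) * w ≤ CG C (p + w) - CG C (p - w)} :=
      isClosed_le (by fun_prop) (by fun_prop)
    exact e1.union e2
  obtain ⟨m, ⟨⟨hm1, hm2⟩, hm3⟩, hmax⟩ :=
    (isCompact_Icc.inter_right hcl : IsCompact (Icc w0 K ∩ {w | Good C δ p w})).exists_isGreatest
      ⟨w0, ⟨le_rfl, bound w0 hw0 hg0'⟩, hg0'⟩
  have hmpos : 0 < m := by linarith
  have hmax' : ∀ w > 0, Good C δ p w → w ≤ m := by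
    intro w hw hg
    rcases le_total w w0 with h | h
    · linarith
    · exact hmax ⟨⟨h, bound w hw hg⟩, hg⟩
  have hG : IsGreatest {ω : ℝ | 0 ≤ ω ∧ relMeasure C.carrier p ω ∉ Ioo δ (1 - δ)} m := by
    refine ⟨⟨hmpos.le, (rel_notin' hmpos).mpr hm3⟩, ?_⟩
    rintro w ⟨hw1, hw2⟩
    rcases hw1.eq_or_lt with h | h
    · linarith
    · exact hmax' w h ((rel_notin' h).mp hw2)
  have : omegaMax C δ p = m := hG.csSup_eq
  rw [this]
  exact ⟨hmpos, hm3, hmax'⟩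

/-- standing hypotheses of the main theorem -/
structure Setup (δ : ℝ) (C : Config) (vB vW : ℝ) (μ : ℝ → ℝ) : Prop where
  hδ1 : 0 < δ
  hδ2 : δ < 1 / 2
  h1 : CE C (2 * C.r) = 1
  hctr : IsCounterexample δ C
  hmin : ∀ C' : Config, C'.r < C.r → ¬ IsCounterexample δ C'
  hvB : IsGreatest {v : ℝ | IsBlack C δ v ∧ v ≤ 1 / 2 ∧ 1 - v ≤ omegaMax C δ v} vB
  hvW : IsLeast {v : ℝ | IsWhite C δ v ∧ 1 / 2 ≤ v ∧ v ≤ omegaMax C δ v} vW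
  hμB : ∀ v : ℝ, IsBlack C δ v → 0 < μ v ∧
    ∀ ω > 0, relMeasure C.carrier v ω ≤ relMeasure C.carrier v (μ v)
  hμW : ∀ v : ℝ, IsWhite C δ v → 0 < μ v ∧
    ∀ ω > 0, relMeasure C.carrier v (μ v) ≤ relMeasure C.carrier v ω

section
variable {δ : ℝ} {C : Config} {vB vW : ℝ} {μ : ℝ → ℝ}

def PB (C : Config) (δ : ℝ) (μ : ℝ → ℝ) (vB vW : ℝ) : Set (ℝ × ℝ) :=
  {p | p.1 ∈ Fpts C vB vW ∧ IsBlack C δ p.1 ∧ p.2 = μ p.1}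
def PW (C : Config) (δ : ℝ) (μ : ℝ → ℝ) (vB vW : ℝ) : Set (ℝ × ℝ) :=
  {p | p.1 ∈ Fpts C vB vW ∧ IsWhite C δ p.1 ∧ p.2 = μ p.1}
def PB2 (C : Config) (δ : ℝ) (vB vW : ℝ) : Set (ℝ × ℝ) :=
  {p | p.1 ∈ Fpts C vB vW ∧ BM δ (CG C) p.1 p.2}
def PW2 (C : Config) (δ : ℝ) (vB vW : ℝ) : Set (ℝ × ℝ) :=
  {p | p.1 ∈ Fpts C vB vW ∧ WM δ (CG C) p.1 p.2}

theorem Setup.om (T : Setup δ C vB vW μ) {p : ℝ} (hp : p ∈ C.endpoints) :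
    0 < omegaMax C δ p ∧ Good C δ p (omegaMax C δ p) ∧
      ∀ w > 0, Good C δ p w → w ≤ omegaMax C δ p :=
  om_facts T.hδ1 T.hδ2 T.h1 T.hctr hp

theorem Setup.BMμ (T : Setup δ C vB vW μ) {p : ℝ} (hp : IsBlack C δ p) :
    BM δ (CG C) p (μ p) := by
  obtain ⟨hμ, hm⟩ := T.hμB p hp
  obtain ⟨ho, -, -⟩ := T.om hp.1
  refine ⟨hμ, (le_rel hμ).mp (hp.2.trans (hm _ ho)), fun w hw => ?_⟩
  have := hm w hw
  rw [rel_eq C p hw.le, rel_eq C p hμ.le, div_le_div_iff₀ (by linarith) (by linarith)] at this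
  linarith

theorem Setup.WMμ (T : Setup δ C vB vW μ) {p : ℝ} (hp : IsWhite C δ p) :
    WM δ (CG C) p (μ p) := by
  obtain ⟨hμ, hm⟩ := T.hμW p hp
  obtain ⟨ho, -, -⟩ := T.om hp.1
  refine ⟨hμ, (rel_le hμ).mp ((hm _ ho).trans hp.2), fun w hw => ?_⟩
  have := hm w hw
  rw [rel_eq C p hw.le, rel_eq C p hμ.le, div_le_div_iff₀ (by linarith) (by linarith)] at this
  linarith

theorem Setup.bw (T : Setup δ C vB vW μ) {p : ℝ} (hp : p ∈ C.endpoints) :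
    IsBlack C δ p ∨ IsWhite C δ p := by
  obtain ⟨ho, hg, -⟩ := T.om hp
  rcases hg with h | h
  · exact Or.inr ⟨hp, (rel_le ho).mpr h⟩
  · exact Or.inl ⟨hp, (le_rel ho).mpr h⟩

/-- white points: either a strict white minimum or a strict black radius below the white one -/
theorem Setup.wstrict (T : Setup δ C vB vW μ) {p : ℝ} (hp : IsWhite C δ p) :
    (∃ ν > 0, CG C (p + ν) - CG C (p - ν) < 2 * δ * ν) ∨
      WOK δ (CG C) p (omegaMax C δ p) ∧ WM δ (CG C) p (omegaMax C δ p) ∧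
      ∃ ν > 0, 2 * (1 - δ) * ν < CG C (p + ν) - CG C (p - ν) := by
  obtain ⟨ho, hg, hmax⟩ := T.om hp.1
  have hw := (rel_le ho).mp hp.2
  by_cases hs : ∃ ν > 0, CG C (p + ν) - CG C (p - ν) < 2 * δ * ν
  · exact Or.inl hs
  right
  push Not at hs
  obtain ⟨ν, hν, hν2⟩ := T.hctr p hp.1
  have hν3 : 2 * (1 - δ) * ν < CG C (p + ν) - CG C (p - ν) := by
    rcases (rel_notin hν).mp hν2 with h | h
    · exact absurd (hs ν hν) (not_le.mpr h)
    · exact h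
  have hle : ν ≤ omegaMax C δ p := hmax ν hν (Or.inr hν3.le)
  have hne : ν ≠ omegaMax C δ p := by
    intro h
    rw [← h] at hw
    have := T.hδ2
    nlinarith
  have heq : CG C (p + omegaMax C δ p) - CG C (p - omegaMax C δ p) = 2 * δ * omegaMax C δ p :=
    le_antisymm hw (hs _ ho)
  refine ⟨⟨ho, Or.inr ⟨hw, ν, hν, lt_of_le_of_ne hle hne, hν3⟩⟩, ⟨ho, hw, fun w hw' => ?_⟩,
    ν, hν, hν3⟩
  have := hs w hw'
  rw [heq]
  nlinarith

theorem Setup.bstrict (T : Setup δ C vB vW μ) {p : ℝ} (hp : IsBlack C δ p) :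
    (∃ ν > 0, 2 * (1 - δ) * ν < CG C (p + ν) - CG C (p - ν)) ∨
      BOK δ (CG C) p (omegaMax C δ p) ∧ BM δ (CG C) p (omegaMax C δ p) ∧
      ∃ ν > 0, CG C (p + ν) - CG C (p - ν) < 2 * δ * ν := by
  obtain ⟨ho, hg, hmax⟩ := T.om hp.1
  have hw := (le_rel ho).mp hp.2
  by_cases hs : ∃ ν > 0, 2 * (1 - δ) * ν < CG C (p + ν) - CG C (p - ν)
  · exact Or.inl hs
  right
  push Not at hs
  obtain ⟨ν, hν, hν2⟩ := T.hctr p hp.1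
  have hν3 : CG C (p + ν) - CG C (p - ν) < 2 * δ * ν := by
    rcases (rel_notin hν).mp hν2 with h | h
    · exact h
    · exact absurd (hs ν hν) (not_le.mpr h)
  have hle : ν ≤ omegaMax C δ p := hmax ν hν (Or.inl hν3.le)
  have hne : ν ≠ omegaMax C δ p := by
    intro h
    rw [← h] at hw
    have := T.hδ2
    nlinarith
  have heq : CG C (p + omegaMax C δ p) - CG C (p - omegaMax C δ p) =
      2 * (1 - δ) * omegaMax C δ p := le_antisymm (hs _ ho) hw
  refine ⟨⟨ho, Or.inr ⟨hw, ν, hν, lt_of_le_of_ne hle hne, hν3⟩⟩, ⟨ho, hw, fun w hw' => ?_⟩,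
    ν, hν, hν3⟩
  have := hs w hw'
  rw [heq]
  nlinarith

theorem Setup.exW (T : Setup δ C vB vW μ) {p : ℝ} (hp : p ∈ C.endpoints)
    (h : ∃ ν > 0, CG C (p + ν) - CG C (p - ν) < 2 * δ * ν) :
    ∃ ρ, WM δ (CG C) p ρ ∧ WOK δ (CG C) p ρ := by
  obtain ⟨i, hi, rfl⟩ := (mem_endpoints C p).mp hp
  obtain ⟨ν, hν, h2⟩ := h
  obtain ⟨ρ, h3, h4⟩ := exWM T.hδ2 (CG_prof C) hi hν h2
  exact ⟨ρ, h3, h3.1, Or.inl h4⟩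

theorem Setup.exB (T : Setup δ C vB vW μ) {p : ℝ} (hp : p ∈ C.endpoints)
    (h : ∃ ν > 0, 2 * (1 - δ) * ν < CG C (p + ν) - CG C (p - ν)) :
    ∃ ρ, BM δ (CG C) p ρ ∧ BOK δ (CG C) p ρ := by
  obtain ⟨i, hi, rfl⟩ := (mem_endpoints C p).mp hp
  obtain ⟨ν, hν, h2⟩ := h
  obtain ⟨ρ, h3, h4⟩ := exBM T.hδ2 (CG_prof C) hi hν h2
  exact ⟨ρ, h3, h3.1, Or.inl h4⟩

/-- maximal black radius at a point with a strict black radius -/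
theorem Setup.bmu (T : Setup δ C vB vW μ) {p : ℝ} (hp : IsBlack C δ p)
    (h : ∃ ν > 0, 2 * (1 - δ) * ν < CG C (p + ν) - CG C (p - ν)) : BOK δ (CG C) p (μ p) := by
  obtain ⟨h1, h2, h3⟩ := T.BMμ hp
  obtain ⟨ν, hν, h4⟩ := h
  refine ⟨h1, Or.inl ?_⟩
  have := h3 ν hν
  by_contra hcon
  push Not at hcon
  have a := mul_le_mul_of_nonneg_right hcon hν.le
  have b := mul_lt_mul_of_pos_right h4 h1
  nlinarith

theorem Setup.wmu (T : Setup δ C vB vW μ) {p : ℝ} (hp : IsWhite C δ p)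
    (h : ∃ ν > 0, CG C (p + ν) - CG C (p - ν) < 2 * δ * ν) : WOK δ (CG C) p (μ p) := by
  obtain ⟨h1, h2, h3⟩ := T.WMμ hp
  obtain ⟨ν, hν, h4⟩ := h
  refine ⟨h1, Or.inl ?_⟩
  have := h3 ν hν
  by_contra hcon
  push Not at hcon
  have a := mul_le_mul_of_nonneg_right hcon hν.le
  have b := mul_lt_mul_of_pos_right h4 h1
  nlinarith

theorem Setup.sys (T : Setup δ C vB vW μ) {P Q : Set (ℝ × ℝ)}
    (hP : P ⊆ PB2 C δ vB vW) (hQ : Q ⊆ PW2 C δ vB vW)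
    (cov : ∀ p ∈ Fpts C vB vW,
      (∃ ρ, (p, ρ) ∈ P ∧ BOK δ (CG C) p ρ) ∨ (∃ ρ, (p, ρ) ∈ Q ∧ WOK δ (CG C) p ρ)) :
    Sys δ C.r (CE C) (CG C) vB vW P Q := by
  have hprof := CG_prof C
  have h01 : CE C 0 = 0 := CE_zero C
  have hδ1 := T.hδ1
  have hδ2 := T.hδ2
  obtain ⟨⟨hb, hbh, hbo⟩, hbmax⟩ := T.hvB
  obtain ⟨⟨hw, hwh, hwo⟩, hwmin⟩ := T.hvW
  have rng : ∀ p ∈ C.endpoints, 0 ≤ p ∧ p ≤ 1 := by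
    intro p hp
    obtain ⟨i, hi, rfl⟩ := (mem_endpoints C p).mp hp
    exact ⟨by rw [← h01]; exact hprof.le (by omega) hi,
      by rw [← T.h1]; exact hprof.le hi le_rfl⟩
  have hml := hprof.ml 0 1 (by norm_num)
  constructor
  · exact hδ1
  · exact hδ2
  · exact C.hr
  · exact hprof
  · exact H_of_min hδ2 T.hmin
  · rw [h01, T.h1]
    obtain ⟨ho, -, -⟩ := T.om hb.1
    have h2 := (le_rel ho).mp hb.2
    rw [mass_large T.h1 (by linarith) (by linarith)] at h2
    nlinarith
  · rw [h01, T.h1]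
    obtain ⟨ho, -, -⟩ := T.om hw.1
    have h2 := (rel_le ho).mp hw.2
    rw [mass_large T.h1 (by linarith) (by linarith)] at h2
    nlinarith
  · intro i hi h1 h2
    rw [h01, T.h1] at h1 h2
    have hp : CE C i ∈ C.endpoints := (mem_endpoints C _).mpr ⟨i, hi, rfl⟩
    obtain ⟨r0, r1⟩ := rng _ hp
    obtain ⟨ho, hg, hmax⟩ := T.om hp
    set p := CE C i
    have hle : 1 - p ≤ omegaMax C δ p := hmax (1 - p) (by linarith) (Or.inr (by
      rw [mass_large T.h1 (by linarith) (by linarith)]; linarith))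
    have hD := mass_large T.h1 (p := p) (w := omegaMax C δ p) (by linarith) (by linarith)
    refine hbmax ⟨⟨hp, (le_rel ho).mpr ?_⟩, by linarith, hle⟩
    rcases hg with h | h
    · rw [hD] at h; nlinarith
    · exact h
  · intro i hi h1 h2
    rw [h01, T.h1] at h1 h2
    have hp : CE C i ∈ C.endpoints := (mem_endpoints C _).mpr ⟨i, hi, rfl⟩
    obtain ⟨r0, r1⟩ := rng _ hp
    obtain ⟨ho, hg, hmax⟩ := T.om hp
    set p := CE C i
    have hle : p ≤ omegaMax C δ p := hmax p (by linarith) (Or.inl (by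
      rw [mass_large T.h1 (by linarith) (by linarith)]; linarith))
    have hD := mass_large T.h1 (p := p) (w := omegaMax C δ p) (by linarith) (by linarith)
    refine hwmin ⟨⟨hp, (rel_le ho).mpr ?_⟩, by linarith, hle⟩
    rcases hg with h | h
    · exact h
    · rw [hD] at h; nlinarith
  · rw [h01, T.h1]; linarith
  · rw [h01, T.h1]; linarith
  · rw [h01]; exact (rng _ hb.1).1
  · rw [T.h1]; exact (rng _ hw.1).2
  · intro p hp
    obtain ⟨⟨h1, h2, h3⟩, h4⟩ := hP hp
    exact ⟨(mem_endpoints C _).mp h1, h2, h3, h4⟩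
  · intro p hp
    obtain ⟨⟨h1, h2, h3⟩, h4⟩ := hQ hp
    exact ⟨(mem_endpoints C _).mp h1, h2, h3, h4⟩
  · intro i hi h1 h2
    exact cov _ ⟨(mem_endpoints C _).mpr ⟨i, hi, rfl⟩, h1, h2⟩

theorem Setup.PB_sub (T : Setup δ C vB vW μ) : PB C δ μ vB vW ⊆ PB2 C δ vB vW := by
  rintro ⟨p, ρ⟩ ⟨h1, h2, h3⟩
  refine ⟨h1, ?_⟩
  rw [h3]; exact T.BMμ h2

theorem Setup.PW_sub (T : Setup δ C vB vW μ) : PW C δ μ vB vW ⊆ PW2 C δ vB vW := by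
  rintro ⟨p, ρ⟩ ⟨h1, h2, h3⟩
  refine ⟨h1, ?_⟩
  rw [h3]; exact T.WMμ h2

theorem Setup.S1 (T : Setup δ C vB vW μ) :
    Sys δ C.r (CE C) (CG C) vB vW (PB C δ μ vB vW) (PW2 C δ vB vW) := by
  refine T.sys T.PB_sub subset_rfl (fun p hp => ?_)
  rcases T.bw hp.1 with hb | hw
  · rcases T.bstrict hb with h | ⟨-, -, h⟩
    · exact Or.inl ⟨μ p, ⟨hp, hb, rfl⟩, T.bmu hb h⟩
    · obtain ⟨ρ, h1, h2⟩ := T.exW hp.1 h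
      exact Or.inr ⟨ρ, ⟨hp, h1⟩, h2⟩
  · right
    rcases T.wstrict hw with h | ⟨h1, h2, -⟩
    · obtain ⟨ρ, h1, h2⟩ := T.exW hp.1 h
      exact ⟨ρ, ⟨hp, h1⟩, h2⟩
    · exact ⟨_, ⟨hp, h2⟩, h1⟩

theorem Setup.S2 (T : Setup δ C vB vW μ) :
    Sys δ C.r (CE C) (CG C) vB vW (PB2 C δ vB vW) (PW C δ μ vB vW) := by
  refine T.sys subset_rfl T.PW_sub (fun p hp => ?_)
  rcases T.bw hp.1 with hb | hw
  · left
    rcases T.bstrict hb with h | ⟨h1, h2, -⟩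
    · obtain ⟨ρ, h1, h2⟩ := T.exB hp.1 h
      exact ⟨ρ, ⟨hp, h1⟩, h2⟩
    · exact ⟨_, ⟨hp, h2⟩, h1⟩
  · rcases T.wstrict hw with h | ⟨-, -, h⟩
    · exact Or.inr ⟨μ p, ⟨hp, hw, rfl⟩, T.wmu hw h⟩
    · obtain ⟨ρ, h1, h2⟩ := T.exB hp.1 h
      exact Or.inl ⟨ρ, ⟨hp, h1⟩, h2⟩

theorem Setup.S3 (T : Setup δ C vB vW μ) :
    Sys δ C.r (CE C) (CG C) vB vW (PB2 C δ vB vW) (PW2 C δ vB vW) := by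
  refine T.sys subset_rfl subset_rfl (fun p hp => ?_)
  rcases (T.S1.cov) with h
  obtain ⟨i, hi, h2⟩ := (mem_endpoints C p).mp hp.1
  have := h i hi (by rw [← h2]; exact hp.2.1) (by rw [← h2]; exact hp.2.2)
  rw [← h2] at this
  rcases this with ⟨ρ, h3, h4⟩ | h3
  · exact Or.inl ⟨ρ, T.PB_sub h3, h4⟩
  · exact Or.inr h3
end

/-! ### The final bridge -/

section
variable {δ : ℝ} {C : Config} {vB vW : ℝ} {μ : ℝ → ℝ}

theorem comp_connected {U : Set ℝ} {s t x : ℝ} (h : IsComp U s t) (h1 : s < x) (h2 : x < t) :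
    connectedComponentIn U x = Ioo s t := by
  obtain ⟨hst, hin, hs, ht⟩ := h
  apply Subset.antisymm
  · have hpre : IsPreconnected (connectedComponentIn U x) := isPreconnected_connectedComponentIn
    have hoc := hpre.ordConnected
    have hx : x ∈ connectedComponentIn U x := mem_connectedComponentIn (hin x h1 h2)
    have hsub := connectedComponentIn_subset U x
    intro y hy
    constructor
    · by_contra hcon
      push Not at hcon
      exact hs (hsub (hoc.out hy hx ⟨hcon, h1.le⟩))
    · by_contra hcon
      push Not at hcon
      exact ht (hsub (hoc.out hx hy ⟨h2.le, hcon⟩))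
  · exact isPreconnected_Ioo.subset_connectedComponentIn ⟨h1, h2⟩ (fun y hy => hin y hy.1 hy.2)

theorem mem_FB1 {x : ℝ} : x ∈ FB1 C δ μ vB vW ↔ ∃ p ∈ PB C δ μ vB vW, InI p x := by
  unfold FB1
  constructor
  · intro h
    obtain ⟨p, hp⟩ := mem_iUnion.mp h
    obtain ⟨hq, hx⟩ := mem_iUnion.mp hp
    exact ⟨(p, μ p), ⟨hq.1, hq.2, rfl⟩, hx⟩
  · rintro ⟨⟨p, ρ⟩, ⟨h1, h2, h3⟩, h4⟩
    simp only at h3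
    subst h3
    exact mem_iUnion.mpr ⟨p, mem_iUnion.mpr ⟨⟨h1, h2⟩, h4⟩⟩

theorem mem_FW1 {x : ℝ} : x ∈ FW1 C δ μ vB vW ↔ ∃ p ∈ PW C δ μ vB vW, InI p x := by
  unfold FW1
  constructor
  · intro h
    obtain ⟨p, hp⟩ := mem_iUnion.mp h
    obtain ⟨hq, hx⟩ := mem_iUnion.mp hp
    exact ⟨(p, μ p), ⟨hq.1, hq.2, rfl⟩, hx⟩
  · rintro ⟨⟨p, ρ⟩, ⟨h1, h2, h3⟩, h4⟩
    simp only at h3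
    subst h3
    exact mem_iUnion.mpr ⟨p, mem_iUnion.mpr ⟨⟨h1, h2⟩, h4⟩⟩

theorem FB_eq : FB C δ μ vB vW = UB C.r (CE C) (PB C δ μ vB vW) := by
  ext x
  unfold FB FB2
  constructor
  · rintro (h | h)
    · obtain ⟨p, hp, h⟩ := mem_FB1.mp h
      exact ⟨p, hp, Or.inl h⟩
    · obtain ⟨i, hi⟩ := mem_iUnion.mp h
      obtain ⟨⟨y, hy, hy2⟩, hx⟩ := mem_iUnion.mp hi
      obtain ⟨p, hp, hpy⟩ := mem_FB1.mp hy
      refine ⟨p, hp, Or.inr ⟨i, i.2, ?_⟩⟩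
      rw [CE_odd C i.2, CE_even C i.2]
      exact ⟨hx.1, hx.2, y, hpy, hy2.1, hy2.2⟩
  · rintro ⟨p, hp, h | ⟨k, hk, h1, h2, y, h3, h4, h5⟩⟩
    · exact Or.inl (mem_FB1.mpr ⟨p, hp, h⟩)
    · right
      rw [CE_odd C hk] at h1 h4
      rw [CE_even C hk] at h2 h5
      exact mem_iUnion.mpr ⟨⟨k, hk⟩, mem_iUnion.mpr
        ⟨⟨y, mem_FB1.mpr ⟨p, hp, h3⟩, h4, h5⟩, h1, h2⟩⟩

theorem mem_FW {x : ℝ} : x ∈ FW C δ μ vB vW ↔ ∃ p ∈ PW C δ μ vB vW, InI p x ∨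
    ∃ k, k + 1 < C.r ∧ CE C (2 * (k + 1)) < x ∧ x < CE C (2 * (k + 1) + 1) ∧
    ∃ y, InI p y ∧ CE C (2 * (k + 1)) < y ∧ y < CE C (2 * (k + 1) + 1) := by
  unfold FW FW2
  constructor
  · rintro (h | h)
    · obtain ⟨p, hp, h⟩ := mem_FW1.mp h
      exact ⟨p, hp, Or.inl h⟩
    · obtain ⟨i, hi⟩ := mem_iUnion.mp h
      obtain ⟨hr, hi⟩ := mem_iUnion.mp hi
      obtain ⟨⟨y, hy, hy2⟩, hx⟩ := mem_iUnion.mp hi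
      obtain ⟨p, hp, hpy⟩ := mem_FW1.mp hy
      refine ⟨p, hp, Or.inr ⟨i, hr, ?_⟩⟩
      rw [CE_odd C hr, show 2 * (i + 1) = 2 * i + 2 by ring, CE_even C (by omega : i < C.r)]
      exact ⟨hx.1, hx.2, y, hpy, hy2.1, hy2.2⟩
  · rintro ⟨p, hp, h | ⟨k, hk, h1, h2, y, h3, h4, h5⟩⟩
    · exact Or.inl (mem_FW1.mpr ⟨p, hp, h⟩)
    · right
      rw [CE_odd C hk] at h2 h5
      rw [show 2 * (k + 1) = 2 * k + 2 by ring, CE_even C (by omega : k < C.r)] at h1 h4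
      exact mem_iUnion.mpr ⟨k, mem_iUnion.mpr ⟨hk, mem_iUnion.mpr
        ⟨⟨y, mem_FW1.mpr ⟨p, hp, h3⟩, h4, h5⟩, h1, h2⟩⟩⟩

theorem FW_sub : FW C δ μ vB vW ⊆ UW C.r (CE C) (PW C δ μ vB vW) := by
  intro x hx
  obtain ⟨p, hp, h | ⟨k, hk, h⟩⟩ := mem_FW.mp hx
  · exact ⟨p, hp, Or.inl h⟩
  · exact ⟨p, hp, Or.inr ⟨k + 1, hk, h⟩⟩

theorem FW_diff {x : ℝ} (hx : x ∈ UW C.r (CE C) (PW C δ μ vB vW)) (hx' : x ∉ FW C δ μ vB vW) :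
    CE C 0 < x ∧ x < CE C 1 := by
  obtain ⟨p, hp, h | ⟨k, hk, h⟩⟩ := hx
  · exact absurd (mem_FW.mpr ⟨p, hp, Or.inl h⟩) hx'
  · rcases k with _ | k
    · exact ⟨h.1, h.2.1⟩
    · exact absurd (mem_FW.mpr ⟨p, hp, Or.inr ⟨k, hk, h⟩⟩) hx'

theorem isOpen_FW : IsOpen (FW C δ μ vB vW) := by
  unfold FW FW1 FW2
  refine IsOpen.union ?_ ?_
  · exact isOpen_biUnion fun _ _ => isOpen_Ioo
  · exact isOpen_iUnion fun _ => isOpen_iUnion fun _ => isOpen_iUnion fun _ => isOpen_Ioo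

theorem FW_comp (T : Setup δ C vB vW μ) {x : ℝ} (hx : x ∈ FW C δ μ vB vW) :
    ∃ u v u', IsComp (FW C δ μ vB vW) u v ∧ u < x ∧ x < v ∧
      IsComp (UW C.r (CE C) (PW C δ μ vB vW)) u' v ∧ u' ≤ u ∧
      (u = u' ∨ CE C 0 ≤ u' ∧ u < CE C 1) := by
  obtain ⟨u', v', hc', h1', h2'⟩ := UW_comp T.S2 (FW_sub hx)
  obtain ⟨u, v, hc, h1, h2⟩ := exists_comp isOpen_FW hx h1'.le h2'.le
    (fun h => hc'.2.2.1 (FW_sub h)) (fun h => hc'.2.2.2 (FW_sub h))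
  obtain ⟨hu, hv⟩ := comp_sub FW_sub hc hc' h1 h2 h1' h2'
  have hprof := CG_prof C
  have hr := C.hr
  have hvv : v = v' := by
    by_contra hne
    have hlt : v < v' := lt_of_le_of_ne hv hne
    obtain ⟨g1, g2⟩ := FW_diff (hc'.2.1 v (by linarith) hlt) hc.2.2.2
    obtain ⟨p, hp, h | ⟨k, hk, h⟩⟩ := mem_FW.mp hx
    · obtain ⟨⟨i, hi, hpi⟩, hpb, -, -⟩ := T.S2.hQ p hp
      have hlo := T.S2.loB
      have hi1 : 1 ≤ i := by
        by_contra hcon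
        have : i = 0 := by omega
        subst this; linarith
      have hE : CE C 1 ≤ CE C i := hprof.le hi1 hi
      have hpos := T.S2.posQ hp
      exact hc.2.2.2 (mem_FW.mpr ⟨p, hp, Or.inl ⟨by have := h.1; linarith, by linarith⟩⟩)
    · have hE : CE C 1 ≤ CE C (2 * (k + 1)) := hprof.le (by omega) (by omega)
      linarith [h.1]
  subst hvv
  refine ⟨u, v, u', hc, h1, h2, hc', hu, ?_⟩
  rcases hu.eq_or_lt with h | h
  · exact Or.inl h.symm
  · right
    have := FW_diff (hc'.2.1 u h (by linarith)) hc.2.2.1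
    obtain ⟨k, hk, hk2⟩ := endW_left T.S2 hc'
    exact ⟨by rw [hk2]; exact hprof.le (by omega) (by omega), this.2⟩

end

/-- If `J_B` is a connected component of `F_B` and `J_W` a connected component of `F_W`,
then exactly one of the following holds: `J_B ∩ J_W = ∅`, or `J_B ⊆ J_W`, or `J_W ⊆ J_B`. -/
theorem component_trichotomy
    (δ : ℝ) (hδ1 : 1 / 4 < δ) (hδ2 : δ < 1 / 2)
    (C : Config) (hlast : IsGreatest (range C.b) 1)
    (hctr : IsCounterexample δ C)
    (hmin : ∀ C' : Config, C'.r < C.r → ¬ IsCounterexample δ C')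
    (vB vW : ℝ)
    (hvB : IsGreatest {v : ℝ | IsBlack C δ v ∧ v ≤ 1 / 2 ∧ 1 - v ≤ omegaMax C δ v} vB)
    (hvW : IsLeast {v : ℝ | IsWhite C δ v ∧ 1 / 2 ≤ v ∧ v ≤ omegaMax C δ v} vW)
    (μ : ℝ → ℝ)
    (hμB : ∀ v : ℝ, IsBlack C δ v → 0 < μ v ∧
      ∀ ω > 0, relMeasure C.carrier v ω ≤ relMeasure C.carrier v (μ v))
    (hμW : ∀ v : ℝ, IsWhite C δ v → 0 < μ v ∧
      ∀ ω > 0, relMeasure C.carrier v (μ v) ≤ relMeasure C.carrier v ω)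
    (hF : (Fpts C vB vW).Nonempty)
    (JB JW : Set ℝ)
    (hJB : ∃ x ∈ FB C δ μ vB vW, JB = connectedComponentIn (FB C δ μ vB vW) x)
    (hJW : ∃ x ∈ FW C δ μ vB vW, JW = connectedComponentIn (FW C δ μ vB vW) x) :
    (JB ∩ JW = ∅ ∧ ¬ JB ⊆ JW ∧ ¬ JW ⊆ JB) ∨
    (JB ∩ JW ≠ ∅ ∧ JB ⊆ JW ∧ ¬ JW ⊆ JB) ∨
    (JB ∩ JW ≠ ∅ ∧ ¬ JB ⊆ JW ∧ JW ⊆ JB) := by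
  have hlast1 : CE C (2 * C.r) = 1 := by
    have hr := C.hr
    have hprof := CG_prof C
    apply le_antisymm
    · refine hlast.2 ?_
      refine ⟨⟨C.r - 1, by omega⟩, ?_⟩
      rw [← CE_even C, show 2 * (C.r - 1) + 2 = 2 * C.r by omega]
    · obtain ⟨k, hk⟩ := hlast.1
      rw [← hk, ← CE_even C k.2]
      exact hprof.le (by omega) le_rfl
  have T : Setup δ C vB vW μ :=
    ⟨by linarith, hδ2, hlast1, hctr, hmin, hvB, hvW, hμB, hμW⟩
  have hprof := CG_prof C
  obtain ⟨x, hx, rfl⟩ := hJB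
  obtain ⟨y, hy, rfl⟩ := hJW
  rw [FB_eq] at hx
  obtain ⟨s, t, hB, hsx, hxt⟩ := UB_comp T.S1 hx
  obtain ⟨u, v, u', hW, huy, hyv, hW', huu, hu⟩ := FW_comp T hy
  rw [FB_eq, comp_connected hB hsx hxt, comp_connected hW huy hyv]
  have hst := hB.1
  have huv := hW.1
  have hne : t ≠ v := by
    obtain ⟨k, hk, h⟩ := endB_right T.S1 hB
    rcases endW_right T.S2 hW' with h2 | ⟨l, hl, h2⟩
    · have := hprof.le (i := 2 * k + 2) (j := 2 * C.r) (by omega) le_rfl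
      intro h3; linarith
    · intro h3
      rw [h, h2] at h3
      rcases Nat.lt_or_ge (2 * k + 2) (2 * l + 1) with h4 | h4
      · have := hprof.lt h4 (by omega); linarith
      · have := hprof.lt (i := 2 * l + 1) (j := 2 * k + 2) (by omega) (by omega); linarith
  have hnot : ¬ (Ioo s t ⊆ Ioo u v ∧ Ioo u v ⊆ Ioo s t) := by
    rintro ⟨h1, h2⟩
    have a := ((Ioo_subset_Ioo_iff hst).mp h1).2
    have b := ((Ioo_subset_Ioo_iff huv).mp h2).2
    exact hne (le_antisymm a b)
  by_cases hemp : Ioo s t ∩ Ioo u v = ∅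
  · left
    refine ⟨hemp, fun h => ?_, fun h => ?_⟩
    · have : x ∈ Ioo s t ∩ Ioo u v := ⟨⟨hsx, hxt⟩, h ⟨hsx, hxt⟩⟩
      rw [hemp] at this; exact this
    · have : y ∈ Ioo s t ∩ Ioo u v := ⟨h ⟨huy, hyv⟩, ⟨huy, hyv⟩⟩
      rw [hemp] at this; exact this
  · right
    obtain ⟨z, ⟨z1, z2⟩, z3, z4⟩ := nonempty_iff_ne_empty.mpr hemp
    rcases nested T.PB_sub T.PW_sub T.S1 T.S2 T.S3 hB hW' (by linarith) (by linarith) with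
      ⟨h1, h2⟩ | ⟨h1, h2⟩
    · right
      have hsub : Ioo u v ⊆ Ioo s t := Ioo_subset_Ioo (by linarith) h2
      exact ⟨hemp, fun h => hnot ⟨h, hsub⟩, hsub⟩
    · left
      have hus : u ≤ s := by
        rcases hu with h | ⟨h3, h4⟩
        · rw [h]; exact h1
        · rcases endB_left T.S1 hB with h5 | ⟨k, hk, h5⟩
          · linarith
          · have := hprof.le (i := 1) (j := 2 * k + 1) (by omega) (by omega)
            linarith
      have hsub : Ioo s t ⊆ Ioo u v := Ioo_subset_Ioo hus h2
      exact ⟨hemp, hsub, fun h => hnot ⟨hsub, h⟩⟩
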